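/- arXiv:2008.01011 — 8 statements merged into one kernel-verified Lean document; each statement's English description precedes it below -/
import Mathlib

section
/- Let X be a real Banach space, S ⊆ X, and suppose s* := s*(S, X) < ∞. Let P be a Borel probability measure on S of growth order s*. Then: (a) for every s > s* and every codec C for S, the approximation class A^s(C) is a P*-null set, i.e., P*(A^s(C)) = 0; and (b) for every s with 0 ≤ s < s* there exist a codec C = (E_R, D_R)_{R∈ℕ} for S and a constant K > 0 such that δ(E_R, D_R) ≤ K·R^{−s} for all R ∈ ℕ; in particular A^s(C) = S and P(A^s(C)) = 1. -/
open MeasureTheory Metric Set ENNReal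

noncomputable section

variable {X : Type*}

/-- `CompressibleAt S s`: there is a codec `(E_R, D_R)_{R ∈ ℕ}` for `S` with
`sup_{R ∈ ℕ} R^s · δ(E_R, D_R) < ∞`. -/
def CompressibleAt [NormedAddCommGroup X] (S : Set X) (s : ℝ) : Prop :=
  ∃ (E : (R : ℕ) → S → (Fin R → Bool)) (D : (R : ℕ) → (Fin R → Bool) → X) (K : ℝ),
    ∀ R : ℕ, 0 < R → ∀ x : S, (R : ℝ) ^ s * ‖(x : X) - D R (E R x)‖ ≤ K

/-- The optimal compression rate `s*(S, X) ∈ [0,∞]`. -/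
def optRate [NormedAddCommGroup X] (S : Set X) : ℝ≥0∞ :=
  sSup (ENNReal.ofReal '' {s : ℝ | 0 ≤ s ∧ CompressibleAt S s})

/-- The approximation class `A^s(C)` of a codec `C = (E, D)`. -/
def approxClass [NormedAddCommGroup X] (S : Set X)
    (E : (R : ℕ) → S → (Fin R → Bool)) (D : (R : ℕ) → (Fin R → Bool) → X)
    (s : ℝ) : Set S :=
  {x : S | ∃ K : ℝ, ∀ R : ℕ, 0 < R → (R : ℝ) ^ s * ‖(x : X) - D R (E R x)‖ ≤ K}

/-- `P` has (logarithmic) growth order `s₀`. -/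
def HasGrowthOrder [NormedAddCommGroup X] [MeasurableSpace X] (S : Set X)
    (P : Measure S) (s₀ : ℝ) : Prop :=
  ∀ s : ℝ, s₀ < s → ∃ ε₀ c : ℝ, 0 < ε₀ ∧ 0 < c ∧
    ∀ (x : X) (ε : ℝ), 0 < ε → ε < ε₀ →
      P {y : S | (y : X) ∈ Metric.closedBall x ε} ≤
        ENNReal.ofReal ((2 : ℝ) ^ (-(c * ε ^ (-(1 : ℝ) / s))))

open Filter Topology

/-- A linear exponent loses against a superlinear one. -/
lemma tendsto_two_rpow_sub_mul_rpow {b a : ℝ} (hb : 0 < b) (ha : 1 < a) :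
    Tendsto (fun R : ℕ => (2 : ℝ) ^ ((R : ℝ) - b * (R : ℝ) ^ a)) atTop (𝓝 0) := by
  refine (tendsto_rpow_atBot_of_base_gt_one 2 one_lt_two).comp ?_
  have hpow : Tendsto (fun x : ℝ => b * x ^ (a - 1)) atTop atTop :=
    (tendsto_rpow_atTop (sub_pos.2 ha)).const_mul_atTop hb
  have hreal : Tendsto (fun x : ℝ => x * (1 - b * x ^ (a - 1))) atTop atBot :=
    tendsto_id.atTop_mul_atBot₀ (tendsto_atBot_add_const_left _ 1 (tendsto_neg_atTop_atBot.comp hpow))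
  refine (hreal.comp tendsto_natCast_atTop_atTop).congr' ?_
  filter_upwards [eventually_gt_atTop 0] with R hR
  have hR' : (0 : ℝ) < R := by exact_mod_cast hR
  have hsplit : (R : ℝ) ^ a = R * (R : ℝ) ^ (a - 1) := by
    rw [← Real.rpow_one_add' hR'.le (by linarith)]
    congr 1
    ring
  simp only [Function.comp_apply, hsplit]
  ring

/-- A set contained in a union of `2 ^ R` closed balls has measure at most `2 ^ R` times any
common bound for the measures of the balls. -/
lemma measure_le_of_decoder_balls [NormedAddCommGroup X] [MeasurableSpace X] {S : Set X}
    (P : Measure S) {A : Set S} {R : ℕ} {e : S → (Fin R → Bool)} {d : (Fin R → Bool) → X}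
    {ε : ℝ} {β : ℝ≥0∞} (hA : ∀ x ∈ A, ‖(x : X) - d (e x)‖ ≤ ε)
    (hβ : ∀ z : X, P {y : S | (y : X) ∈ closedBall z ε} ≤ β) : P A ≤ 2 ^ R * β := by
  have hsub : A ⊆ ⋃ w : Fin R → Bool, {y : S | (y : X) ∈ closedBall (d w) ε} := fun x hx =>
    mem_iUnion.2 ⟨e x, by simpa [dist_eq_norm] using hA x hx⟩
  calc P A ≤ ∑ w : Fin R → Bool, P {y : S | (y : X) ∈ closedBall (d w) ε} :=
        (measure_mono hsub).trans (measure_iUnion_fintype_le P _)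
    _ ≤ ∑ _w : Fin R → Bool, β := Finset.sum_le_sum fun w _ => hβ (d w)
    _ = 2 ^ R * β := by simp

/-- Above the growth order, the points compressed at rate `s` with a fixed constant form a
null set. -/
lemma HasGrowthOrder.measure_bounded_class_eq_zero [NormedAddCommGroup X] [MeasurableSpace X]
    {S : Set X} {P : Measure S} {s₀ s : ℝ} (hP : HasGrowthOrder S P s₀) (hs₀ : 0 ≤ s₀)
    (hs : s₀ < s) (E : (R : ℕ) → S → (Fin R → Bool)) (D : (R : ℕ) → (Fin R → Bool) → X)
    {K : ℝ} (hK : 0 < K) :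
    P {x : S | ∀ R : ℕ, 0 < R → (R : ℝ) ^ s * ‖(x : X) - D R (E R x)‖ ≤ K} = 0 := by
  obtain ⟨t, hst, hts⟩ := exists_between hs
  have ht : 0 < t := hs₀.trans_lt hst
  obtain ⟨ε₀, c, hε₀, hc, hball⟩ := hP t hst
  have hlim : Tendsto (fun R : ℕ => ENNReal.ofReal
      ((2 : ℝ) ^ ((R : ℝ) - c * K ^ (-1 / t) * (R : ℝ) ^ (s / t)))) atTop (𝓝 0) := by
    simpa using ENNReal.tendsto_ofReal
      (tendsto_two_rpow_sub_mul_rpow (b := c * K ^ (-1 / t)) (a := s / t)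
        (by positivity) ((one_lt_div ht).2 hts))
  have hradius : Tendsto (fun R : ℕ => K * (R : ℝ) ^ (-s)) atTop (𝓝 0) := by
    simpa using ((tendsto_rpow_neg_atTop (ht.trans hts)).comp
      tendsto_natCast_atTop_atTop).const_mul K
  refine le_antisymm (ge_of_tendsto hlim ?_) zero_le
  filter_upwards [eventually_gt_atTop 0, hradius.eventually_lt_const hε₀] with R hR hRε
  have hR' : (0 : ℝ) < R := by exact_mod_cast hR
  have hRs : (0 : ℝ) < (R : ℝ) ^ s := Real.rpow_pos_of_pos hR' s
  refine (measure_le_of_decoder_balls P (e := E R) (d := D R) (ε := K * (R : ℝ) ^ (-s))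
    (fun x hx => ?_) (fun z => hball z _ (by positivity) hRε)).trans_eq ?_
  · rw [Real.rpow_neg hR'.le, ← div_eq_mul_inv, le_div_iff₀ hRs, mul_comm]
    exact hx R hR
  · have hexp : (K * (R : ℝ) ^ (-s)) ^ (-1 / t) = K ^ (-1 / t) * (R : ℝ) ^ (s / t) := by
      rw [Real.mul_rpow hK.le (by positivity), ← Real.rpow_mul hR'.le]
      congr 2
      ring
    have htwo : (2 : ℝ≥0∞) ^ R = ENNReal.ofReal ((2 : ℝ) ^ (R : ℝ)) := by
      rw [Real.rpow_natCast, ENNReal.ofReal_pow zero_le_two, ENNReal.ofReal_ofNat]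
    rw [hexp, htwo, ← ENNReal.ofReal_mul (by positivity), ← Real.rpow_add two_pos]
    congr 2
    ring

/-- Above the growth order, every approximation class is a null set. -/
lemma HasGrowthOrder.measure_approxClass_eq_zero [NormedAddCommGroup X] [MeasurableSpace X]
    {S : Set X} {P : Measure S} {s₀ s : ℝ} (hP : HasGrowthOrder S P s₀) (hs₀ : 0 ≤ s₀)
    (hs : s₀ < s) (E : (R : ℕ) → S → (Fin R → Bool)) (D : (R : ℕ) → (Fin R → Bool) → X) :
    P (approxClass S E D s) = 0 := by
  refine measure_mono_null (t := ⋃ n : ℕ, {x : S | ∀ R : ℕ, 0 < R →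
    (R : ℝ) ^ s * ‖(x : X) - D R (E R x)‖ ≤ (n : ℝ) + 1}) ?_
    (measure_iUnion_null fun n => hP.measure_bounded_class_eq_zero hs₀ hs E D (by positivity))
  rintro x ⟨K, hK⟩
  obtain ⟨n, hn⟩ := exists_nat_ge K
  exact mem_iUnion.2 ⟨n, fun R hR => (hK R hR).trans (hn.trans (by simp))⟩

lemma CompressibleAt.mono [NormedAddCommGroup X] {S : Set X} {s t : ℝ}
    (ht : CompressibleAt S t) (hst : s ≤ t) : CompressibleAt S s := by
  obtain ⟨E, D, K, h⟩ := ht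
  refine ⟨E, D, K, fun R hR x => le_trans ?_ (h R hR x)⟩
  have hR' : (1 : ℝ) ≤ R := by exact_mod_cast hR
  gcongr

lemma compressibleAt_of_lt_optRate [NormedAddCommGroup X] {S : Set X} {s : ℝ}
    (h : ENNReal.ofReal s < optRate S) : CompressibleAt S s := by
  obtain ⟨_, ⟨t, ⟨_, hcomp⟩, rfl⟩, hst⟩ := lt_sSup_iff.1 h
  exact hcomp.mono (ENNReal.ofReal_lt_ofReal_iff'.1 hst).1.le

theorem statement0
    [NormedAddCommGroup X] [NormedSpace ℝ X] [CompleteSpace X]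
    [MeasurableSpace X] [BorelSpace X]
    (S : Set X) (sStar : ℝ) (hsStar : 0 ≤ sStar)
    (hopt : optRate S = ENNReal.ofReal sStar)
    (P : Measure S) [IsProbabilityMeasure P]
    (hP : HasGrowthOrder S P sStar) :
    (∀ s : ℝ, sStar < s →
      ∀ (E : (R : ℕ) → S → (Fin R → Bool)) (D : (R : ℕ) → (Fin R → Bool) → X),
        P (approxClass S E D s) = 0) ∧
    (∀ s : ℝ, 0 ≤ s → s < sStar →
      ∃ (E : (R : ℕ) → S → (Fin R → Bool)) (D : (R : ℕ) → (Fin R → Bool) → X) (K : ℝ),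
        0 < K ∧
        (∀ R : ℕ, 0 < R → ∀ x : S, ‖(x : X) - D R (E R x)‖ ≤ K * (R : ℝ) ^ (-s)) ∧
        approxClass S E D s = Set.univ ∧ P (approxClass S E D s) = 1) := by
  refine ⟨fun s hs E D => hP.measure_approxClass_eq_zero hsStar hs E D, fun s hs0 hs => ?_⟩
  obtain ⟨E, D, K, h⟩ := compressibleAt_of_lt_optRate (S := S) (s := s)
    (hopt ▸ (ENNReal.ofReal_lt_ofReal_iff (hs0.trans_lt hs)).2 hs)
  have huniv : approxClass S E D s = Set.univ :=
    eq_univ_of_forall fun x => ⟨K, fun R hR => h R hR x⟩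
  refine ⟨E, D, max K 1, by positivity, fun R hR x => ?_, huniv, by rw [huniv, measure_univ]⟩
  have hR' : (0 : ℝ) < R := by exact_mod_cast hR
  rw [Real.rpow_neg hR'.le, ← div_eq_mul_inv, le_div_iff₀ (Real.rpow_pos_of_pos hR' s), mul_comm]
  exact (h R hR x).trans (le_max_left _ _)
end
end

section
/- Let d ∈ ℕ, let 𝒫 = (I_m)_{m∈ℕ} be a d-regular partition of a countably infinite index set I, let p, q ∈ (0,∞] and α ∈ ℝ with α > d·(1/2 − 1/p)_+. Then the unit ball S := S_{𝒫,α}^{p,q} is a compact subset of ℓ²(I); its optimal compression rate with respect to ℓ²(I) equals s*(S, ℓ²(I)) = α/d − (1/2 − 1/p); and there exists a Borel probability measure P on S such that for every s > α/d − (1/2 − 1/p) there exist c, ε0 > 0 with P(S ∩ B̄(y, ε; ℓ²(I))) ≤ 2^{−c·ε^{−1/s}} for all y ∈ ℓ²(I) and all ε ∈ (0, ε0), where B̄(y, ε; ℓ²(I)) is the closed ℓ²-ball of radius ε around y. -/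
open MeasureTheory Metric Set ENNReal

noncomputable section

/-- `‖x|_F‖_{ℓ^p(F)} ∈ [0,∞]` for a finset `F ⊆ I`. -/
def finsetLpNorm {I : Type*} (p : ℝ≥0∞) (F : Finset I) (x : I → ℝ) : ℝ≥0∞ :=
  if p = ∞ then ⨆ i ∈ F, ENNReal.ofReal |x i|
  else (∑ i ∈ F, ENNReal.ofReal |x i| ^ p.toReal) ^ (1 / p.toReal)

/-- `‖u‖_{ℓ^q(ℕ)} ∈ [0,∞]` for a sequence `u : ℕ → [0,∞]`. -/
def seqLqNorm (q : ℝ≥0∞) (u : ℕ → ℝ≥0∞) : ℝ≥0∞ :=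
  if q = ∞ then ⨆ m, u m else (∑' m, u m ^ q.toReal) ^ (1 / q.toReal)

/-- The mixed norm `‖x‖_{Pt,α,θ}^{p,q} ∈ [0,∞]`; the blocks are indexed by
`m + 1`, `m : ℕ`, realizing the index set `ℕ = {1, 2, …}` of the paper. -/
def mixedNorm {I : Type*} (Pt : ℕ → Finset I) (p q : ℝ≥0∞) (α θ : ℝ) (x : I → ℝ) : ℝ≥0∞ :=
  seqLqNorm q fun m =>
    ENNReal.ofReal ((2 : ℝ) ^ (α * ((m + 1 : ℕ) : ℝ)) * ((m + 1 : ℕ) : ℝ) ^ θ) *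
      finsetLpNorm p (Pt (m + 1)) x

/-- `Pt` is a `d`-regular partition of `I` with constants `0 < a < A`:
the sets `(Pt m)_{m ≥ 1}` partition `I` and `a·2^(dm) ≤ |Pt m| ≤ A·2^(dm)` for `m ≥ 1`. -/
structure IsRegularPartition {I : Type*} (d : ℕ) (Pt : ℕ → Finset I) (a A : ℝ) : Prop where
  a_pos : 0 < a
  a_lt_A : a < A
  partition : ∀ i : I, ∃! m : ℕ, 0 < m ∧ i ∈ Pt m
  card_lower : ∀ m : ℕ, 0 < m → a * 2 ^ (d * m) ≤ ((Pt m).card : ℝ)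
  card_upper : ∀ m : ℕ, 0 < m → ((Pt m).card : ℝ) ≤ A * 2 ^ (d * m)

variable {X : Type*}

theorem le_one_of_seqLqNorm_le_one {q : ℝ≥0∞} (hq : 0 < q) {u : ℕ → ℝ≥0∞}
    (h : seqLqNorm q u ≤ 1) (m : ℕ) : u m ≤ 1 := by
  unfold seqLqNorm at h
  split_ifs at h with hq'
  · exact (le_iSup u m).trans h
  · have hr : 0 < q.toReal := ENNReal.toReal_pos hq.ne' hq'
    have h1 : (∑' m, u m ^ q.toReal) ≤ 1 := by
      rw [← ENNReal.rpow_le_rpow_iff (one_div_pos.2 hr), ENNReal.one_rpow]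
      exact h
    rw [← ENNReal.rpow_le_rpow_iff hr, ENNReal.one_rpow]
    exact (ENNReal.le_tsum m).trans h1

theorem sum_rpow_le_of_finsetLpNorm_le {I : Type*} {p : ℝ≥0∞} (hp : 0 < p) (hp' : p ≠ ∞)
    {F : Finset I} {x : I → ℝ} {t : ℝ} (ht : 0 ≤ t)
    (h : finsetLpNorm p F x ≤ ENNReal.ofReal t) :
    ∑ i ∈ F, |x i| ^ p.toReal ≤ t ^ p.toReal := by
  have hr : 0 < p.toReal := ENNReal.toReal_pos hp.ne' hp'
  rw [finsetLpNorm, if_neg hp', one_div, ENNReal.rpow_inv_le_iff hr,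
    ENNReal.ofReal_rpow_of_nonneg ht hr.le] at h
  rw [← ENNReal.ofReal_le_ofReal_iff (by positivity),
    ENNReal.ofReal_sum_of_nonneg fun i _ => by positivity]
  refine le_trans (le_of_eq (Finset.sum_congr rfl fun i _ => ?_)) h
  rw [ENNReal.ofReal_rpow_of_nonneg (abs_nonneg _) hr.le]

theorem abs_le_of_finsetLpNorm_le {I : Type*} {p : ℝ≥0∞} (hp : 0 < p)
    {F : Finset I} {x : I → ℝ} {t : ℝ} (ht : 0 ≤ t)
    (h : finsetLpNorm p F x ≤ ENNReal.ofReal t) {i : I} (hi : i ∈ F) : |x i| ≤ t := by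
  by_cases hp' : p = ∞
  · rw [finsetLpNorm, if_pos hp'] at h
    exact (ENNReal.ofReal_le_ofReal_iff ht).1
      ((le_iSup₂ (f := fun i (_ : i ∈ F) => ENNReal.ofReal |x i|) i hi).trans h)
  · have hr : 0 < p.toReal := ENNReal.toReal_pos hp.ne' hp'
    have h1 := sum_rpow_le_of_finsetLpNorm_le hp hp' ht h
    have h2 : |x i| ^ p.toReal ≤ t ^ p.toReal :=
      (Finset.single_le_sum (f := fun i => |x i| ^ p.toReal)
        (fun j _ => by positivity) hi).trans h1
    exact (Real.rpow_le_rpow_iff (abs_nonneg _) ht hr).1 h2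

theorem sum_sq_le_of_finsetLpNorm_le {I : Type*} {p : ℝ≥0∞} (hp : 0 < p)
    {F : Finset I} {x : I → ℝ} {t : ℝ} (ht : 0 ≤ t)
    (h : finsetLpNorm p F x ≤ ENNReal.ofReal t) :
    ∑ i ∈ F, x i ^ 2 ≤ (F.card : ℝ) ^ (2 * max (1 / 2 - 1 / p.toReal) 0) * t ^ 2 := by
  by_cases hp' : p = ∞
  · have h1 : ∀ i ∈ F, x i ^ 2 ≤ t ^ 2 := fun i hi =>
      sq_le_sq' (neg_le_of_abs_le (abs_le_of_finsetLpNorm_le hp ht h hi))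
        (le_of_abs_le (abs_le_of_finsetLpNorm_le hp ht h hi))
    refine (Finset.sum_le_card_nsmul F _ _ h1).trans (le_of_eq ?_)
    subst hp'
    norm_num
  have hr : 0 < p.toReal := ENNReal.toReal_pos hp.ne' hp'
  have h1 := sum_rpow_le_of_finsetLpNorm_le hp hp' ht h
  set r := p.toReal with hr_def
  rcases le_total 2 r with h2 | h2
  · have hmax : max (1 / 2 - 1 / r) 0 = 1 / 2 - 1 / r := by
      apply max_eq_left
      have := one_div_le_one_div_of_le two_pos h2
      linarith
    rw [hmax]
    have h3 := Real.rpow_sum_le_const_mul_sum_rpow F (fun i => x i ^ 2) (p := r / 2) (by linarith)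
    have h4 : ∀ i, |x i ^ 2| ^ (r / 2) = |x i| ^ r := fun i => by
      rw [abs_pow, ← Real.rpow_natCast_mul (abs_nonneg _)]
      congr 1
      push_cast
      ring
    simp only [h4] at h3
    simp only [abs_sq] at h3
    rw [← Real.rpow_le_rpow_iff (z := r / 2) (Finset.sum_nonneg fun i _ => sq_nonneg _)
      (by positivity) (by positivity)]
    refine h3.trans ((mul_le_mul_of_nonneg_left h1 (by positivity)).trans (le_of_eq ?_))
    rw [Real.mul_rpow (by positivity) (by positivity), ← Real.rpow_mul (by positivity),
      ← Real.rpow_natCast_mul ht]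
    congr 2
    · field_simp
    · push_cast
      ring
  · have hmax : max (1 / 2 - 1 / r) 0 = 0 := by
      apply max_eq_right
      have := one_div_le_one_div_of_le hr h2
      linarith
    rw [hmax, mul_zero, Real.rpow_zero, one_mul]
    have h3 : ∀ i ∈ F, x i ^ 2 ≤ t ^ (2 - r) * |x i| ^ r := fun i hi => by
      have h4 := abs_le_of_finsetLpNorm_le hp ht h hi
      calc x i ^ 2 = |x i| ^ (2 - r) * |x i| ^ r := by
            rw [← Real.rpow_add_of_nonneg (abs_nonneg _) (by linarith) hr.le,
              sub_add_cancel, Real.rpow_two, sq_abs]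
        _ ≤ _ := by
          gcongr
    calc ∑ i ∈ F, x i ^ 2 ≤ ∑ i ∈ F, t ^ (2 - r) * |x i| ^ r := Finset.sum_le_sum h3
      _ = t ^ (2 - r) * ∑ i ∈ F, |x i| ^ r := by rw [Finset.mul_sum]
      _ ≤ t ^ (2 - r) * t ^ r := by gcongr
      _ = t ^ 2 := by
        rw [← Real.rpow_add_of_nonneg ht (by linarith) hr.le, sub_add_cancel, Real.rpow_two]

theorem finsetLpNorm_le_of_mixedNorm_le_one {I : Type*} {Pt : ℕ → Finset I} {p q : ℝ≥0∞}
    (hq : 0 < q) {α : ℝ} {x : I → ℝ} (h : mixedNorm Pt p q α 0 x ≤ 1) (m : ℕ) :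
    finsetLpNorm p (Pt (m + 1)) x ≤ ENNReal.ofReal ((2 : ℝ) ^ (-(α * ((m + 1 : ℕ) : ℝ)))) := by
  have h1 := le_one_of_seqLqNorm_le_one hq h m
  simp only [Real.rpow_zero, mul_one] at h1
  have h2 : (0 : ℝ) < 2 ^ (α * ((m + 1 : ℕ) : ℝ)) := by positivity
  rw [Real.rpow_neg (by norm_num), ENNReal.ofReal_inv_of_pos h2]
  exact ENNReal.le_inv_iff_mul_le.2 (by rwa [mul_comm])

theorem lowerSemicontinuous_finsetLpNorm {I : Type*} (p : ℝ≥0∞) (F : Finset I) :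
    LowerSemicontinuous fun x : I → ℝ => finsetLpNorm p F x := by
  have h (i : I) : Continuous fun x : I → ℝ => ENNReal.ofReal |x i| :=
    ENNReal.continuous_ofReal.comp (continuous_apply i).abs
  unfold finsetLpNorm
  split_ifs
  · exact lowerSemicontinuous_biSup fun i _ => (h i).lowerSemicontinuous
  · refine (ENNReal.continuous_rpow_const.comp (continuous_finsetSum _ fun i _ =>
      ENNReal.continuous_rpow_const.comp (h i))).lowerSemicontinuous

theorem lowerSemicontinuous_mixedNorm {I : Type*} (Pt : ℕ → Finset I) (p q : ℝ≥0∞) (α θ : ℝ) :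
    LowerSemicontinuous fun x : I → ℝ => mixedNorm Pt p q α θ x := by
  have h (m : ℕ) : LowerSemicontinuous fun x : I → ℝ =>
      ENNReal.ofReal ((2 : ℝ) ^ (α * ((m + 1 : ℕ) : ℝ)) * ((m + 1 : ℕ) : ℝ) ^ θ) *
        finsetLpNorm p (Pt (m + 1)) x :=
    (ENNReal.continuous_const_mul ENNReal.ofReal_ne_top).comp_lowerSemicontinuous
      (lowerSemicontinuous_finsetLpNorm p _) fun _ _ hab => by dsimp only; gcongr
  unfold mixedNorm seqLqNorm
  split_ifs
  · exact lowerSemicontinuous_iSup h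
  · refine ENNReal.continuous_rpow_const.comp_lowerSemicontinuous
      (lowerSemicontinuous_tsum fun m => ENNReal.continuous_rpow_const.comp_lowerSemicontinuous
        (h m) (ENNReal.monotone_rpow_of_nonneg ENNReal.toReal_nonneg))
      (ENNReal.monotone_rpow_of_nonneg (by positivity))

theorem isClosed_mixedNorm_le_one {I : Type*} (Pt : ℕ → Finset I) (p q : ℝ≥0∞) (α θ : ℝ) :
    IsClosed {f : lp (fun _ : I => ℝ) 2 | mixedNorm Pt p q α θ ⇑f ≤ 1} :=
  ((lowerSemicontinuous_mixedNorm Pt p q α θ).isClosed_preimage 1).preimage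
    lp.uniformContinuous_coe.continuous

theorem IsRegularPartition.pairwiseDisjoint {I : Type*} {d : ℕ} {Pt : ℕ → Finset I} {a A : ℝ}
    (hreg : IsRegularPartition d Pt a A) (s : Set ℕ) :
    s.PairwiseDisjoint fun m => Pt (m + 1) := by
  intro m _ n _ hmn
  refine Finset.disjoint_left.2 fun i hi hj => hmn ?_
  have := (hreg.partition i).unique ⟨Nat.succ_pos m, hi⟩ ⟨Nat.succ_pos n, hj⟩
  omega

/-- Finite sums over the index set are controlled by sums over finitely many blocks. -/
theorem IsRegularPartition.sum_sq_le {I : Type*} {d : ℕ} {Pt : ℕ → Finset I} {a A : ℝ}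
    (hreg : IsRegularPartition d Pt a A) {g : I → ℝ} {b : ℕ → ℝ} {C : ℝ}
    (hb : ∀ m, ∑ i ∈ Pt (m + 1), g i ^ 2 ≤ b m)
    (hC : ∀ L, ∑ m ∈ Finset.range L, b m ≤ C) (F : Finset I) : ∑ i ∈ F, g i ^ 2 ≤ C := by
  classical
  choose μ hμ using fun i => (hreg.partition i).exists
  have hsub : F ⊆ (Finset.range (F.sup μ)).biUnion fun m => Pt (m + 1) := fun i hi => by
    refine Finset.mem_biUnion.2 ⟨μ i - 1, Finset.mem_range.2 ?_, ?_⟩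
    · have := Finset.le_sup (f := μ) hi
      have := (hμ i).1
      omega
    · rw [Nat.sub_add_cancel (hμ i).1]
      exact (hμ i).2
  calc ∑ i ∈ F, g i ^ 2 ≤ ∑ i ∈ (Finset.range (F.sup μ)).biUnion fun m => Pt (m + 1), g i ^ 2 :=
        Finset.sum_le_sum_of_subset_of_nonneg hsub fun i _ _ => sq_nonneg _
    _ = ∑ m ∈ Finset.range (F.sup μ), ∑ i ∈ Pt (m + 1), g i ^ 2 :=
        Finset.sum_biUnion (hreg.pairwiseDisjoint _)
    _ ≤ ∑ m ∈ Finset.range (F.sup μ), b m := Finset.sum_le_sum fun m _ => hb m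
    _ ≤ C := hC _

theorem memℓp_two_of_sum_sq_le {I : Type*} {g : I → ℝ} {C : ℝ}
    (h : ∀ F : Finset I, ∑ i ∈ F, g i ^ 2 ≤ C) : Memℓp g 2 :=
  memℓp_gen' (C := C) fun F => by simpa using h F

theorem lp_two_norm_sq_le {I : Type*} {g : lp (fun _ : I => ℝ) 2} {C : ℝ}
    (h : ∀ F : Finset I, ∑ i ∈ F, g i ^ 2 ≤ C) : ‖g‖ ^ 2 ≤ C := by
  have hC : 0 ≤ C := by simpa using h ∅
  have h1 : ‖g‖ ≤ √C := lp.norm_le_of_forall_sum_le (by norm_num) (Real.sqrt_nonneg _) fun F => by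
    simpa [Real.sq_sqrt hC] using h F
  calc ‖g‖ ^ 2 ≤ √C ^ 2 := by gcongr
    _ = C := Real.sq_sqrt hC

theorem sum_sq_le_lp_two_norm_sq {I : Type*} (g : lp (fun _ : I => ℝ) 2) (F : Finset I) :
    ∑ i ∈ F, g i ^ 2 ≤ ‖g‖ ^ 2 := by
  simpa using lp.sum_rpow_le_norm_rpow (p := 2) (by norm_num) g F

/-- Geometric decay of the `ℓ²` norms of the blocks of elements of the unit ball. -/
theorem IsRegularPartition.exists_sum_sq_block_le {I : Type*} {d : ℕ} {Pt : ℕ → Finset I}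
    {a A : ℝ} (hreg : IsRegularPartition d Pt a A) {p q : ℝ≥0∞} (hp : 0 < p) (hq : 0 < q)
    (α : ℝ) : ∃ C : ℝ, 0 < C ∧ ∀ x : I → ℝ, mixedNorm Pt p q α 0 x ≤ 1 → ∀ m : ℕ,
      ∑ i ∈ Pt (m + 1), x i ^ 2 ≤
        C * ((2 : ℝ) ^ (-(2 * (α - d * max (1 / 2 - 1 / p.toReal) 0)))) ^ (m + 1) := by
  set β := max (1 / 2 - 1 / p.toReal) 0 with hβ
  have hβ0 : 0 ≤ β := le_max_right _ _
  have hA : 0 < A := hreg.a_pos.trans hreg.a_lt_A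
  refine ⟨A ^ (2 * β), by positivity, fun x hx m => ?_⟩
  refine (sum_sq_le_of_finsetLpNorm_le hp (by positivity)
    (finsetLpNorm_le_of_mixedNorm_le_one hq hx m)).trans ?_
  rw [← hβ]
  have hc := hreg.card_upper (m + 1) m.succ_pos
  calc ((Pt (m + 1)).card : ℝ) ^ (2 * β) * ((2 : ℝ) ^ (-(α * ((m + 1 : ℕ) : ℝ)))) ^ 2
      ≤ (A * 2 ^ (d * (m + 1))) ^ (2 * β) * ((2 : ℝ) ^ (-(α * ((m + 1 : ℕ) : ℝ)))) ^ 2 := by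
        gcongr
    _ = _ := by
        rw [Real.mul_rpow hA.le (by positivity), mul_assoc]
        congr 1
        rw [← Real.rpow_natCast, ← Real.rpow_natCast, ← Real.rpow_natCast,
          ← Real.rpow_mul (by norm_num), ← Real.rpow_mul (by norm_num),
          ← Real.rpow_mul (by norm_num), ← Real.rpow_add (by norm_num)]
        congr 1
        push_cast
        ring

theorem memℓp_two_of_mixedNorm_le_one {I : Type*} {d : ℕ} {Pt : ℕ → Finset I} {a A : ℝ}
    (hreg : IsRegularPartition d Pt a A) {p q : ℝ≥0∞} (hp : 0 < p) (hq : 0 < q) {α : ℝ}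
    (hα : (d : ℝ) * max (1 / 2 - 1 / p.toReal) 0 < α) {x : I → ℝ}
    (hx : mixedNorm Pt p q α 0 x ≤ 1) : Memℓp x 2 := by
  obtain ⟨C, hC, h⟩ := hreg.exists_sum_sq_block_le hp hq α
  set r : ℝ := (2 : ℝ) ^ (-(2 * (α - d * max (1 / 2 - 1 / p.toReal) 0))) with hr
  have hr0 : 0 < r := by positivity
  have hr1 : r < 1 := Real.rpow_lt_one_of_one_lt_of_neg (by norm_num) (by linarith)
  refine memℓp_two_of_sum_sq_le (C := C * (1 / (1 - r))) (hreg.sum_sq_le (h x hx) fun L => ?_)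
  rw [← Finset.mul_sum]
  refine mul_le_mul_of_nonneg_left ?_ hC.le
  have h1 := geom_sum_Ico_le_of_lt_one (m := 0) (n := L) hr0.le hr1
  rw [pow_zero, ← Finset.range_eq_Ico] at h1
  exact (Finset.sum_le_sum fun m _ => pow_le_pow_of_le_one hr0.le hr1.le (Nat.le_succ m)).trans h1

theorem exists_code_of_card_le {X : Type*} [Zero X] (G : Finset X) {R : ℕ}
    (h : G.card ≤ 2 ^ R) : ∃ D : (Fin R → Bool) → X, ∀ g ∈ G, ∃ c, D c = g := by
  obtain ⟨e⟩ := Function.Embedding.nonempty_of_card_le (α := G) (β := Fin R → Bool) (by simpa)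
  exact ⟨Function.extend e Subtype.val 0, fun g hg =>
    ⟨e ⟨g, hg⟩, e.injective.extend_apply _ _ _⟩⟩

theorem exists_pow_mul_rpow_le {r : ℝ} (hr : 0 ≤ r) (hr' : r < 1) (k : ℕ) :
    ∃ C : ℝ, 0 < C ∧ ∀ n : ℕ, ((n : ℝ) + 1) ^ k * r ^ n ≤ C := by
  have h := tendsto_pow_const_mul_const_pow_of_abs_lt_one k (r := r) (by rwa [abs_of_nonneg hr])
  rcases hr.eq_or_lt with rfl | hr0
  · refine ⟨1, one_pos, fun n => ?_⟩
    rcases n with _ | n <;> simp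
  obtain ⟨C, hC⟩ := h.bddAbove_range
  refine ⟨max (C / r) 1, by positivity, fun n => le_trans ?_ (le_max_left _ _)⟩
  rw [le_div_iff₀ hr0, mul_assoc, ← pow_succ]
  exact_mod_cast hC ⟨n + 1, rfl⟩

/-- A set which for every `m` can be covered by `2 ^ (C₁ m² 2 ^ (dm))` balls of squared radius
`C₂ (m + 1) 2 ^ (-2 d s₀ m)` is compressible at every rate below `s₀`. -/
theorem compressibleAt_of_covers {X : Type*} [NormedAddCommGroup X] {S : Set X} {C₁ d : ℕ}
    {C₂ s₀ s : ℝ} (hd : 0 < d) (hC₁ : 0 < C₁) (hC₂ : 0 < C₂)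
    (hcov : ∀ m : ℕ, ∃ G : Finset X, G.card ≤ 2 ^ (C₁ * m ^ 2 * 2 ^ (d * m)) ∧
      ∀ f ∈ S, ∃ g ∈ G, ‖f - g‖ ^ 2 ≤ C₂ * (m + 1) * (2 : ℝ) ^ (-(2 * d * s₀ * m)))
    (hs : 0 ≤ s) (hs' : s < s₀) : CompressibleAt S s := by
  choose G hG hcov using hcov
  let P (R m : ℕ) : Prop := C₁ * m ^ 2 * 2 ^ (d * m) ≤ R
  have hPle {R m : ℕ} (h : P R m) : m ≤ R := by
    refine le_trans ?_ h
    calc m ≤ m ^ 2 := Nat.le_self_pow two_ne_zero m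
      _ = 1 * m ^ 2 * 1 := by ring
      _ ≤ C₁ * m ^ 2 * 2 ^ (d * m) := by
        gcongr
        · exact hC₁
        · exact Nat.one_le_two_pow
  classical
  let μ (R : ℕ) : ℕ := Nat.findGreatest (P R) R
  have hμ (R : ℕ) : P R (μ R) := Nat.findGreatest_spec (P := P R) (Nat.zero_le R) (by simp [P])
  have hμ' (R : ℕ) : R < C₁ * (μ R + 1) ^ 2 * 2 ^ (d * (μ R + 1)) := by
    by_contra! h
    exact absurd (Nat.le_findGreatest (P := P R) (hPle h) h) (by simp [μ])
  choose D hD using fun R => exists_code_of_card_le (G (μ R)) (R := R)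
    ((hG (μ R)).trans (Nat.pow_le_pow_right two_pos (hμ R)))
  choose g hgG hg using fun (R : ℕ) (x : S) => hcov (μ R) x x.2
  choose E hE using fun (R : ℕ) (x : S) => hD R (g R x) (hgG R x)
  obtain ⟨k, hk⟩ := exists_nat_ge (4 * s + 1)
  have hd' : (0 : ℝ) < d := by exact_mod_cast hd
  obtain ⟨K, hK, hKle⟩ := exists_pow_mul_rpow_le (r := (2 : ℝ) ^ (-(2 * d * (s₀ - s))))
    (by positivity) (Real.rpow_lt_one_of_one_lt_of_neg (by norm_num)
      (by have := mul_pos hd' (sub_pos.2 hs'); linarith)) k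
  refine ⟨E, D, √((C₁ * 2 ^ d) ^ (2 * s) * C₂ * K), fun R hR x => Real.le_sqrt_of_sq_le ?_⟩
  rw [hE]
  set m := μ R
  have hR' : (R : ℝ) ≤ C₁ * 2 ^ d * ((m : ℝ) + 1) ^ 2 * 2 ^ (d * m) := by
    have := (hμ' R).le
    calc (R : ℝ) ≤ ((C₁ * (m + 1) ^ 2 * 2 ^ (d * (m + 1)) : ℕ) : ℝ) := by exact_mod_cast this
      _ = _ := by
        push_cast
        ring
  have hRs : ((R : ℝ) ^ s) ^ 2 ≤
      (C₁ * 2 ^ d) ^ (2 * s) * ((m : ℝ) + 1) ^ (4 * s) * 2 ^ (2 * d * s * m) := by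
    calc ((R : ℝ) ^ s) ^ 2 = (R : ℝ) ^ (2 * s) := by
          rw [← Real.rpow_mul_natCast (by positivity)]
          congr 1
          push_cast
          ring
      _ ≤ (C₁ * 2 ^ d * ((m : ℝ) + 1) ^ 2 * 2 ^ (d * m)) ^ (2 * s) := by gcongr
      _ = _ := by
        rw [Real.mul_rpow (by positivity) (by positivity),
          Real.mul_rpow (by positivity) (by positivity), ← Real.rpow_natCast_mul (by positivity),
          ← Real.rpow_natCast (2 : ℝ) (d * m), ← Real.rpow_mul (by positivity) ((d * m : ℕ) : ℝ)]
        congr 2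
        · congr 1
          push_cast
          ring
        · push_cast
          ring
  rw [mul_pow]
  calc ((R : ℝ) ^ s) ^ 2 * ‖(x : X) - g R x‖ ^ 2
      ≤ ((C₁ * 2 ^ d) ^ (2 * s) * ((m : ℝ) + 1) ^ (4 * s) * 2 ^ (2 * d * s * m)) *
        (C₂ * (m + 1) * (2 : ℝ) ^ (-(2 * d * s₀ * m))) := by
        gcongr
        exact hg R x
    _ = (C₁ * 2 ^ d) ^ (2 * s) * C₂ * (((m : ℝ) + 1) ^ (4 * s + 1) *
        ((2 : ℝ) ^ (-(2 * d * (s₀ - s)))) ^ m) := by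
        have h1 : ((2 : ℝ) ^ (-(2 * d * (s₀ - s)))) ^ m =
            2 ^ (2 * d * s * m) * (2 : ℝ) ^ (-(2 * d * s₀ * m)) := by
          rw [← Real.rpow_add (by norm_num), ← Real.rpow_mul_natCast (by norm_num)]
          congr 1
          ring
        rw [h1, Real.rpow_add_one (by positivity)]
        ring
    _ ≤ (C₁ * 2 ^ d) ^ (2 * s) * C₂ * K := by
        gcongr
        refine le_trans ?_ (hKle m)
        gcongr
        rw [← Real.rpow_natCast]
        exact Real.rpow_le_rpow_of_exponent_le (by linarith [(Nat.cast_nonneg m : (0 : ℝ) ≤ m)]) hk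

theorem CompressibleAt.totallyBounded {X : Type*} [NormedAddCommGroup X] {S : Set X} {s : ℝ}
    (h : CompressibleAt S s) (hs : 0 < s) : TotallyBounded S := by
  obtain ⟨E, D, K, h⟩ := h
  refine Metric.totallyBounded_iff.2 fun ε hε => ?_
  have h1 : Filter.Tendsto (fun R : ℕ => (R : ℝ) ^ s * ε) Filter.atTop Filter.atTop :=
    ((tendsto_rpow_atTop hs).comp tendsto_natCast_atTop_atTop).atTop_mul_const hε
  obtain ⟨R, hR, hR0⟩ := ((h1.eventually_gt_atTop K).and (Filter.eventually_gt_atTop 0)).exists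
  refine ⟨Set.range (D R), Set.finite_range _, fun x hx => ?_⟩
  refine Set.mem_iUnion₂.2 ⟨_, ⟨E R ⟨x, hx⟩, rfl⟩, ?_⟩
  rw [Metric.mem_ball, dist_eq_norm]
  have hpos : (0 : ℝ) < (R : ℝ) ^ s := Real.rpow_pos_of_pos (by exact_mod_cast hR0) s
  exact lt_of_mul_lt_mul_left ((h R hR0 ⟨x, hx⟩).trans_lt hR) hpos.le

/-- A probability measure with logarithmic small ball decay of order `s'` obstructs compression
at rates above `s'`. -/
theorem CompressibleAt.le_of_smallBall {X : Type*} [NormedAddCommGroup X] [MeasurableSpace X]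
    {S : Set X} {s s' c ε₀ : ℝ} (h : CompressibleAt S s) (P : Measure S)
    [IsProbabilityMeasure P] (hs' : 0 < s') (hc : 0 < c) (hε₀ : 0 < ε₀)
    (hP : ∀ (y : X) (ε : ℝ), 0 < ε → ε < ε₀ →
      P {x | (x : X) ∈ Metric.closedBall y ε} ≤
        ENNReal.ofReal ((2 : ℝ) ^ (-(c * ε ^ (-(1 : ℝ) / s'))))) : s ≤ s' := by
  by_contra! hss
  obtain ⟨E, D, K, h⟩ := h
  set L := max K 1
  have hL : 0 < L := by positivity
  have hs : 0 < s := hs'.trans hss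
  set c' := c * L ^ (-(1 : ℝ) / s')
  have hc' : 0 < c' := by positivity
  have ht : 0 < s / s' - 1 := by
    rw [sub_pos, one_lt_div hs']
    exact hss
  have h1 : Filter.Tendsto (fun R : ℕ => c' * (R : ℝ) ^ (s / s' - 1)) Filter.atTop Filter.atTop :=
    ((tendsto_rpow_atTop ht).comp tendsto_natCast_atTop_atTop).const_mul_atTop hc'
  have h2 : Filter.Tendsto (fun R : ℕ => (R : ℝ) ^ s * ε₀) Filter.atTop Filter.atTop :=
    ((tendsto_rpow_atTop hs).comp tendsto_natCast_atTop_atTop).atTop_mul_const hε₀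
  obtain ⟨R, hR1, hR2, hR0⟩ := ((h1.eventually_gt_atTop 1).and
    ((h2.eventually_gt_atTop L).and (Filter.eventually_gt_atTop 0))).exists
  have hRpos : (0 : ℝ) < R := by exact_mod_cast hR0
  have hRs : (0 : ℝ) < (R : ℝ) ^ s := by positivity
  set ε := L / (R : ℝ) ^ s with hε_def
  have hε : 0 < ε := by positivity
  have hεlt : ε < ε₀ := by
    rw [hε_def, div_lt_iff₀ hRs, mul_comm]
    exact hR2
  have hexp : c * ε ^ (-(1 : ℝ) / s') = c' * (R : ℝ) ^ (s / s' - 1) * R := by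
    rw [hε_def, Real.div_rpow hL.le hRs.le, ← Real.rpow_mul hRpos.le, mul_assoc,
      ← Real.rpow_add_one hRpos.ne', sub_add_cancel, div_eq_mul_inv, ← Real.rpow_neg hRpos.le]
    simp only [c']
    rw [mul_assoc]
    congr 3
    ring
  have hcover : (Set.univ : Set S) ⊆
      ⋃ w : Fin R → Bool, {x | (x : X) ∈ Metric.closedBall (D R w) ε} := fun x _ => by
    refine Set.mem_iUnion.2 ⟨E R x, ?_⟩
    rw [Set.mem_ofPred_eq, Metric.mem_closedBall, dist_eq_norm, hε_def, le_div_iff₀ hRs, mul_comm]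
    exact (h R hR0 x).trans (le_max_left _ _)
  have h3 : (1 : ℝ≥0∞) ≤ ENNReal.ofReal (2 ^ R * (2 : ℝ) ^ (-(c * ε ^ (-(1 : ℝ) / s')))) := by
    calc (1 : ℝ≥0∞) = P Set.univ := measure_univ.symm
      _ ≤ ∑ w : Fin R → Bool, P {x | (x : X) ∈ Metric.closedBall (D R w) ε} :=
        (measure_mono hcover).trans (measure_iUnion_fintype_le _ _)
      _ ≤ ∑ w : Fin R → Bool, ENNReal.ofReal ((2 : ℝ) ^ (-(c * ε ^ (-(1 : ℝ) / s')))) :=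
        Finset.sum_le_sum fun w _ => hP _ ε hε hεlt
      _ = _ := by
        rw [ENNReal.ofReal_mul (by positivity), ENNReal.ofReal_pow (by norm_num)]
        simp
  rw [ENNReal.one_le_ofReal, hexp, ← Real.rpow_natCast, ← Real.rpow_add (by norm_num)] at h3
  refine absurd h3 (not_le.2 (Real.rpow_lt_one_of_one_lt_of_neg (by norm_num) ?_))
  nlinarith

/-- All sums of at most `K` elements of a finite set containing `0` lie in a set of cardinality
at most `N ^ K`. -/
theorem exists_finset_sums {X : Type*} [AddCommMonoid X] (B : Finset X) (hB : 0 ∈ B) {N : ℕ}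
    (hN : B.card ≤ N) (K : ℕ) : ∃ G : Finset X, G.card ≤ N ^ K ∧
      ∀ {ι : Type*} (W : Finset ι) (g : ι → X), W.card ≤ K → (∀ i ∈ W, g i ∈ B) →
        ∑ i ∈ W, g i ∈ G := by
  classical
  induction K with
  | zero =>
    refine ⟨{0}, by simp, fun W g hW _ => ?_⟩
    simp [Finset.card_eq_zero.1 (Nat.le_zero.1 hW)]
  | succ K ih =>
    obtain ⟨G, hG, h⟩ := ih
    refine ⟨Finset.image₂ (· + ·) B G, ?_, fun W g hW hg => ?_⟩
    · refine (Finset.card_image₂_le _ _ _).trans ?_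
      rw [pow_succ']
      exact Nat.mul_le_mul hN hG
    · rcases W.eq_empty_or_nonempty with rfl | ⟨i, hi⟩
      · have := h (∅ : Finset _) g (Nat.zero_le K) (by simp)
        exact Finset.mem_image₂.2 ⟨0, hB, _, this, by simp⟩
      · refine Finset.mem_image₂.2 ⟨g i, hg i hi, ∑ j ∈ W.erase i, g j, h _ g ?_ ?_, ?_⟩
        · rw [Finset.card_erase_of_mem hi]
          omega
        · exact fun j hj => hg j (Finset.mem_of_mem_erase hj)
        · exact Finset.add_sum_erase W g hi

/-- Scalar quantization with step `h` on a finite set `U` of coordinates, of sequences having at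
most `K` coordinates of size at least `h` in `U`. -/
theorem exists_quantization {I : Type*} (U : Finset I) {h : ℝ} (hh : 0 < h) {B : ℕ}
    (hB : 1 / h + 1 ≤ B) (K : ℕ) : ∃ G : Finset (lp (fun _ : I => ℝ) 2),
      G.card ≤ (U.card * (2 * B + 1) + 1) ^ K ∧
      ∀ f : lp (fun _ : I => ℝ) 2, (∀ i ∈ U, |f i| ≤ 1) →
        (U.filter fun i => h ≤ |f i|).card ≤ K →
        ∃ y ∈ G, (∀ i ∈ U, |f i - y i| ≤ min h |f i|) ∧ ∀ i ∉ U, y i = 0 := by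
  classical
  let atom (z : I × ℤ) : lp (fun _ : I => ℝ) 2 := lp.single 2 z.1 (h * z.2)
  obtain ⟨G, hG, hGmem⟩ := exists_finset_sums
    (insert 0 ((U ×ˢ Finset.Icc (-(B : ℤ)) B).image atom)) (Finset.mem_insert_self _ _)
    (N := U.card * (2 * B + 1) + 1) (by
      refine (Finset.card_insert_le _ _).trans (Nat.succ_le_succ (Finset.card_image_le.trans ?_))
      rw [Finset.card_product, Int.card_Icc]
      refine Nat.mul_le_mul_left _ (le_of_eq ?_)
      omega) K
  refine ⟨G, hG, fun f hf hK => ?_⟩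
  set W := U.filter fun i => h ≤ |f i| with hW
  have happ (i : I) : (∑ j ∈ W, atom (j, ⌊f j / h⌋)) i = if i ∈ W then h * ⌊f i / h⌋ else 0 := by
    rw [lp.coeFn_sum, Finset.sum_apply]
    simp only [atom, lp.single_apply, Pi.single_apply]
    rw [Finset.sum_ite_eq]
  refine ⟨∑ i ∈ W, atom (i, ⌊f i / h⌋), hGmem W _ hK fun i hi => ?_, fun i hi => ?_,
    fun i hi => ?_⟩
  · refine Finset.mem_insert_of_mem (Finset.mem_image_of_mem _ (Finset.mem_product.2
      ⟨(Finset.mem_filter.1 hi).1, Finset.mem_Icc.2 ?_⟩))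
    have h1 := abs_le.1 (hf i (Finset.mem_filter.1 hi).1)
    have h2 : f i / h ≤ 1 / h := div_le_div_of_nonneg_right h1.2 hh.le
    have h3 : -(1 / h) ≤ f i / h := by
      rw [← neg_div]
      exact div_le_div_of_nonneg_right h1.1 hh.le
    constructor
    · rw [Int.le_floor]
      push_cast
      linarith
    · have := (Int.floor_le (f i / h)).trans (h2.trans (by linarith : 1 / h ≤ (B : ℝ)))
      rw [← Int.cast_natCast (R := ℝ) B] at this
      exact Int.cast_le.1 this
  · rw [happ]
    split_ifs with hiW
    · have h1 : |f i - h * ⌊f i / h⌋| ≤ h := by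
        have h2 := Int.floor_le (f i / h)
        have h3 := (Int.lt_floor_add_one (f i / h)).le
        rw [le_div_iff₀ hh] at h2
        rw [div_le_iff₀ hh] at h3
        rw [abs_le]
        constructor <;> nlinarith
      exact le_min h1 (h1.trans (Finset.mem_filter.1 hiW).2)
    · rw [sub_zero]
      refine le_min ?_ le_rfl
      by_contra! hlt
      exact hiW (Finset.mem_filter.2 ⟨hi, hlt.le⟩)
  · rw [happ, if_neg fun hiW => hi (Finset.mem_filter.1 hiW).1]

/-- The number of coordinates above a threshold is controlled by the `ℓ^r` norm. -/
theorem card_filter_mul_rpow_le {I : Type*} (F : Finset I) (x : I → ℝ) {h r : ℝ} (hh : 0 ≤ h)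
    (hr : 0 ≤ r) :
    ((F.filter fun i => h ≤ |x i|).card : ℝ) * h ^ r ≤ ∑ i ∈ F, |x i| ^ r := by
  calc ((F.filter fun i => h ≤ |x i|).card : ℝ) * h ^ r
      = ∑ i ∈ F.filter fun i => h ≤ |x i|, h ^ r := by simp
    _ ≤ ∑ i ∈ F.filter fun i => h ≤ |x i|, |x i| ^ r :=
      Finset.sum_le_sum fun i hi => Real.rpow_le_rpow hh (Finset.mem_filter.1 hi).2 hr
    _ ≤ ∑ i ∈ F, |x i| ^ r := Finset.sum_le_sum_of_subset_of_nonneg (Finset.filter_subset _ _)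
      fun i _ _ => by positivity

theorem min_sq_le_rpow_mul_rpow {h y r : ℝ} (hh : 0 ≤ h) (hy : 0 ≤ y) (hr : 0 < r)
    (hr2 : r ≤ 2) : min h y ^ 2 ≤ h ^ (2 - r) * y ^ r := by
  have hm : 0 ≤ min h y := le_min hh hy
  calc min h y ^ 2 = min h y ^ (2 - r) * min h y ^ r := by
        rw [← Real.rpow_add_of_nonneg hm (by linarith) hr.le, sub_add_cancel, Real.rpow_two]
    _ ≤ h ^ (2 - r) * y ^ r := by
        gcongr
        · exact min_le_left _ _
        · exact min_le_right _ _

/-- Blockwise data for quantization with step `2 ^ (-k (d/p + α))`: in the blocks up to `κ k`,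
few coordinates are large and the truncated `ℓ²` norm is small. -/
theorem IsRegularPartition.block_bounds {I : Type*} {d : ℕ} {Pt : ℕ → Finset I}
    {a A : ℝ} (hreg : IsRegularPartition d Pt a A) {p q : ℝ≥0∞} (hp : 0 < p) (hq : 0 < q)
    (hd : 0 < d) {α : ℝ} (hα : 0 < α) {A' : ℕ} (hA' : 1 ≤ A') (hAA' : A ≤ A') {k m : ℕ}
    (hm : m < k ∨ p ≠ ∞ ∧ p.toReal ≤ 2) {h : ℝ}
    (hh : h = (2 : ℝ) ^ (-(k * (d * (1 / p.toReal) + α)))) {x : I → ℝ}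
    (hx : mixedNorm Pt p q α 0 x ≤ 1) :
    ((Pt (m + 1)).filter fun i => h ≤ |x i|).card ≤ A' * 2 ^ (d * k) ∧
    ∑ i ∈ Pt (m + 1), min h |x i| ^ 2 ≤
      A' * (2 : ℝ) ^ (-(2 * d * (α / d - (1 / 2 - 1 / p.toReal)) * k)) := by
  have hh0 : 0 < h := by rw [hh]; positivity
  have hA'1 : (1 : ℝ) ≤ A' := by exact_mod_cast hA'
  have hd' : (d : ℝ) ≠ 0 := by exact_mod_cast hd.ne'
  have hkey : h ^ 2 * 2 ^ (d * k) =
      (2 : ℝ) ^ (-(2 * d * (α / d - (1 / 2 - 1 / p.toReal)) * k)) := by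
    rw [hh, ← Real.rpow_mul_natCast (by norm_num), ← Real.rpow_natCast,
      ← Real.rpow_add (by norm_num)]
    congr 1
    push_cast
    field_simp
    ring
  by_cases hmk : m < k
  · have hcard : (((Pt (m + 1)).card : ℕ) : ℝ) ≤ A' * 2 ^ (d * k) := by
      refine (hreg.card_upper (m + 1) m.succ_pos).trans ?_
      gcongr
      · norm_num
      · omega
    constructor
    · refine (Finset.card_filter_le _ _).trans ?_
      exact_mod_cast hcard
    · calc ∑ i ∈ Pt (m + 1), min h |x i| ^ 2 ≤ ∑ i ∈ Pt (m + 1), h ^ 2 :=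
            Finset.sum_le_sum fun i _ => by
              have : 0 ≤ min h |x i| := le_min hh0.le (abs_nonneg _)
              gcongr
              exact min_le_left _ _
        _ = (Pt (m + 1)).card * h ^ 2 := by simp
        _ ≤ A' * 2 ^ (d * k) * h ^ 2 := by gcongr
        _ = _ := by rw [← hkey]; ring
  · obtain ⟨hp', hp2⟩ := hm.resolve_left hmk
    push Not at hmk
    have hr : 0 < p.toReal := ENNReal.toReal_pos hp.ne' hp'
    have hsum : ∑ i ∈ Pt (m + 1), |x i| ^ p.toReal ≤ h ^ p.toReal * 2 ^ (d * k) := by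
      refine (sum_rpow_le_of_finsetLpNorm_le hp hp' (by positivity)
        (finsetLpNorm_le_of_mixedNorm_le_one hq hx m)).trans ?_
      have hkm : (k : ℝ) ≤ ((m + 1 : ℕ) : ℝ) := by exact_mod_cast hmk.trans m.le_succ
      rw [hh, ← Real.rpow_mul (by norm_num), ← Real.rpow_mul (by norm_num), ← Real.rpow_natCast,
        ← Real.rpow_add (by norm_num)]
      refine Real.rpow_le_rpow_of_exponent_le (by norm_num) ?_
      have h1 : (d : ℝ) * (1 / p.toReal) * p.toReal = d := by field_simp
      push_cast at hkm ⊢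
      have h2 := mul_le_mul_of_nonneg_left hkm (mul_pos hα hr).le
      nlinarith
    constructor
    · have h1 := (card_filter_mul_rpow_le (Pt (m + 1)) x hh0.le hr.le).trans hsum
      rw [mul_comm, mul_le_mul_iff_right₀ (by positivity)] at h1
      have h2 : ((Pt (m + 1)).filter fun i => h ≤ |x i|).card ≤ 2 ^ (d * k) := by exact_mod_cast h1
      exact h2.trans (Nat.le_mul_of_pos_left _ hA')
    · calc ∑ i ∈ Pt (m + 1), min h |x i| ^ 2
          ≤ ∑ i ∈ Pt (m + 1), h ^ (2 - p.toReal) * |x i| ^ p.toReal :=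
            Finset.sum_le_sum fun i _ => min_sq_le_rpow_mul_rpow hh0.le (abs_nonneg _) hr hp2
        _ = h ^ (2 - p.toReal) * ∑ i ∈ Pt (m + 1), |x i| ^ p.toReal := by rw [Finset.mul_sum]
        _ ≤ h ^ (2 - p.toReal) * (h ^ p.toReal * 2 ^ (d * k)) := by gcongr
        _ = h ^ 2 * 2 ^ (d * k) := by
            rw [← mul_assoc, ← Real.rpow_add hh0, sub_add_cancel, Real.rpow_two]
        _ = 1 * (2 : ℝ) ^ (-(2 * d * (α / d - (1 / 2 - 1 / p.toReal)) * k)) := by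
            rw [hkey, one_mul]
        _ ≤ _ := by gcongr

theorem exists_scale_factor {d : ℕ} (hd : 0 < d) {p : ℝ≥0∞} {α : ℝ}
    (hα : (d : ℝ) * max (1 / 2 - 1 / p.toReal) 0 < α) :
    ∃ κ : ℕ, (κ = 1 ∨ p ≠ ∞ ∧ p.toReal ≤ 2) ∧
      d * (α / d - (1 / 2 - 1 / p.toReal)) ≤ (α - d * max (1 / 2 - 1 / p.toReal) 0) * κ := by
  have hd' : (0 : ℝ) < d := by exact_mod_cast hd
  by_cases hp2 : p ≠ ∞ ∧ p.toReal ≤ 2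
  · set γ := α - d * max (1 / 2 - 1 / p.toReal) 0
    have hγ : 0 < γ := sub_pos.2 hα
    obtain ⟨κ, hκ⟩ := exists_nat_ge (d * (α / d - (1 / 2 - 1 / p.toReal)) / γ)
    refine ⟨κ, Or.inr hp2, ?_⟩
    rwa [div_le_iff₀ hγ, mul_comm (κ : ℝ)] at hκ
  · refine ⟨1, Or.inl rfl, le_of_eq ?_⟩
    have hmax : max (1 / 2 - 1 / p.toReal) 0 = 1 / 2 - 1 / p.toReal := by
      apply max_eq_left
      by_cases hp' : p = ∞
      · simp [hp']
      · have h2 : 2 ≤ p.toReal := by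
          by_contra! h
          exact hp2 ⟨hp', h.le⟩
        have := one_div_le_one_div_of_le two_pos h2
        linarith
    rw [hmax]
    push_cast
    field_simp

/-- Cardinality bound for the quantization codebook. -/
theorem codebook_card_le {u κ A d k e : ℕ} (hA : 1 ≤ A)
    (hu : u ≤ κ * k * (A * 2 ^ (d * (κ * k)))) :
    (u * (2 * (2 ^ (k * e) + 1) + 1) + 1) ^ (κ * k * (A * 2 ^ (d * k))) ≤
      2 ^ ((6 * A + κ + d * κ + e) * κ * A * k ^ 2 * 2 ^ (d * k)) := by
  rcases Nat.eq_zero_or_pos k with rfl | hk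
  · simp
  have h1 : u * (2 * (2 ^ (k * e) + 1) + 1) + 1 ≤ 2 ^ (k * (6 * A + κ + d * κ + e)) := by
    have h2 : 1 ≤ 2 ^ (k * e) := Nat.one_le_two_pow
    have h3 : u ≤ A * 2 ^ (k * (κ + d * κ)) := by
      calc u ≤ κ * k * (A * 2 ^ (d * (κ * k))) := hu
        _ ≤ 2 ^ (κ * k) * (A * 2 ^ (d * (κ * k))) := by gcongr; exact Nat.lt_two_pow_self.le
        _ = A * 2 ^ (k * (κ + d * κ)) := by
          rw [mul_left_comm, ← pow_add]
          congr 2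
          ring
    have h4 : 1 ≤ A * 2 ^ (k * (κ + d * κ)) * 2 ^ (k * e) :=
      Nat.mul_pos (Nat.mul_pos hA (by positivity)) (by positivity)
    have h5 : 6 * A ≤ 2 ^ (k * (6 * A)) :=
      Nat.lt_two_pow_self.le.trans
        (Nat.pow_le_pow_right two_pos (Nat.le_mul_of_pos_left _ hk))
    calc u * (2 * (2 ^ (k * e) + 1) + 1) + 1
        ≤ A * 2 ^ (k * (κ + d * κ)) * (5 * 2 ^ (k * e)) +
          A * 2 ^ (k * (κ + d * κ)) * 2 ^ (k * e) := by
          gcongr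
          omega
      _ = 6 * A * (2 ^ (k * (κ + d * κ)) * 2 ^ (k * e)) := by ring
      _ ≤ 2 ^ (k * (6 * A)) * (2 ^ (k * (κ + d * κ)) * 2 ^ (k * e)) := by gcongr
      _ = 2 ^ (k * (6 * A + κ + d * κ + e)) := by
          rw [← pow_add, ← pow_add]
          congr 1
          ring
  calc _ ≤ (2 ^ (k * (6 * A + κ + d * κ + e))) ^ (κ * k * (A * 2 ^ (d * k))) := by gcongr
    _ = _ := by
      rw [← pow_mul]
      congr 1
      ring

theorem IsRegularPartition.exists_covers {I : Type*} {d : ℕ} {Pt : ℕ → Finset I}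
    {a A : ℝ} (hreg : IsRegularPartition d Pt a A) {p q : ℝ≥0∞} (hp : 0 < p) (hq : 0 < q)
    (hd : 0 < d) {α : ℝ} (hα : (d : ℝ) * max (1 / 2 - 1 / p.toReal) 0 < α) :
    ∃ (C₁ : ℕ) (C₂ : ℝ), 0 < C₁ ∧ 0 < C₂ ∧ ∀ k : ℕ, ∃ G : Finset (lp (fun _ : I => ℝ) 2),
      G.card ≤ 2 ^ (C₁ * k ^ 2 * 2 ^ (d * k)) ∧
      ∀ f ∈ {f : lp (fun _ : I => ℝ) 2 | mixedNorm Pt p q α 0 ⇑f ≤ 1}, ∃ g ∈ G,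
        ‖f - g‖ ^ 2 ≤
          C₂ * (k + 1) * (2 : ℝ) ^ (-(2 * d * (α / d - (1 / 2 - 1 / p.toReal)) * k)) := by
  classical
  have hα0 : 0 < α := lt_of_le_of_lt (mul_nonneg (Nat.cast_nonneg d) (le_max_right _ _)) hα
  obtain ⟨C, hC, hblock⟩ := hreg.exists_sum_sq_block_le hp hq α
  obtain ⟨κ, hκ, hκγ⟩ := exists_scale_factor hd hα
  set γ := α - d * max (1 / 2 - 1 / p.toReal) 0
  have hγ : 0 < γ := sub_pos.2 hα
  set s₀ := α / d - (1 / 2 - 1 / p.toReal)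
  set r : ℝ := (2 : ℝ) ^ (-(2 * γ)) with hr_def
  have hr0 : 0 < r := by positivity
  have hr1 : r < 1 := Real.rpow_lt_one_of_one_lt_of_neg (by norm_num) (by linarith)
  obtain ⟨A', hAA'⟩ := exists_nat_ge (max A 1)
  have hA' : 1 ≤ A' := by exact_mod_cast (le_max_right A 1).trans hAA'
  replace hAA' : A ≤ A' := (le_max_left _ _).trans hAA'
  obtain ⟨e, he⟩ := exists_nat_ge ((d : ℝ) * (1 / p.toReal) + α)
  have hr1' : 0 < 1 - r := sub_pos.2 hr1
  refine ⟨(6 * A' + κ + d * κ + e) * κ * A' + 1, κ * A' + C / (1 - r), by positivity,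
    by positivity, fun k => ?_⟩
  set M := κ * k with hM
  set h : ℝ := (2 : ℝ) ^ (-(k * (d * (1 / p.toReal) + α))) with hh
  have hh0 : 0 < h := by positivity
  set U := (Finset.range M).biUnion fun m => Pt (m + 1) with hU
  have hmk {m : ℕ} (hm : m < M) : m < k ∨ p ≠ ∞ ∧ p.toReal ≤ 2 := by
    refine hκ.imp_left fun hκ1 => ?_
    rwa [hM, hκ1, one_mul] at hm
  have hUcard : U.card ≤ M * (A' * 2 ^ (d * M)) := by
    refine Finset.card_biUnion_le.trans ?_
    refine (Finset.sum_le_card_nsmul _ _ (A' * 2 ^ (d * M)) fun m hm => ?_).trans (by simp)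
    have h1 : ((Pt (m + 1)).card : ℝ) ≤ A' * 2 ^ (d * M) := by
      refine (hreg.card_upper (m + 1) m.succ_pos).trans ?_
      have := Finset.mem_range.1 hm
      gcongr
      · norm_num
      · omega
    exact_mod_cast h1
  have hB : 1 / h + 1 ≤ ((2 ^ (k * e) + 1 : ℕ) : ℝ) := by
    push_cast
    gcongr
    rw [hh, one_div, ← Real.rpow_neg (by norm_num), neg_neg, ← Real.rpow_natCast]
    refine Real.rpow_le_rpow_of_exponent_le (by norm_num) ?_
    push_cast
    gcongr
  obtain ⟨G, hG, hGapprox⟩ := exists_quantization U hh0 hB (M * (A' * 2 ^ (d * k)))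
  refine ⟨G, hG.trans ((codebook_card_le hA' hUcard).trans ?_), fun f hf => ?_⟩
  · refine Nat.pow_le_pow_right two_pos ?_
    gcongr
    exact Nat.le_succ _
  have hbounds {m : ℕ} (hm : m < M) :=
    hreg.block_bounds hp hq hd hα0 hA' hAA' (hmk hm) hh hf
  have hfU : ∀ i ∈ U, |f i| ≤ 1 := fun i hi => by
    obtain ⟨m, -, hi⟩ := Finset.mem_biUnion.1 hi
    refine (abs_le_of_finsetLpNorm_le hp (by positivity)
      (finsetLpNorm_le_of_mixedNorm_le_one hq hf m) hi).trans ?_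
    refine Real.rpow_le_one_of_one_le_of_nonpos (by norm_num) ?_
    have : 0 ≤ α * ((m + 1 : ℕ) : ℝ) := by positivity
    linarith
  have hfK : (U.filter fun i => h ≤ |f i|).card ≤ M * (A' * 2 ^ (d * k)) := by
    rw [hU, Finset.filter_biUnion]
    refine Finset.card_biUnion_le.trans ?_
    exact (Finset.sum_le_card_nsmul _ _ _ fun m hm =>
      (hbounds (Finset.mem_range.1 hm)).1).trans (by simp)
  obtain ⟨y, hyG, hyU, hyU'⟩ := hGapprox f hfU hfK
  refine ⟨y, hyG, ?_⟩
  set E : ℝ := (2 : ℝ) ^ (-(2 * d * s₀ * k)) with hE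
  have hE0 : 0 < E := by positivity
  set b : ℕ → ℝ := fun m => if m < M then A' * E else C * r ^ m with hb
  have hb0 (m : ℕ) : 0 ≤ b m := by
    simp only [hb]
    split_ifs <;> positivity
  refine lp_two_norm_sq_le (hreg.sum_sq_le (b := b) (fun m => ?_) fun L => ?_)
  · simp only [hb]
    split_ifs with hm
    · refine le_trans (Finset.sum_le_sum fun i hi => ?_) (hbounds hm).2
      have h1 := hyU i (Finset.mem_biUnion.2 ⟨m, Finset.mem_range.2 hm, hi⟩)
      rw [lp.coeFn_sub, Pi.sub_apply, ← sq_abs]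
      gcongr
    · have h1 : ∀ i ∈ Pt (m + 1), ((f - y : lp (fun _ : I => ℝ) 2) : I → ℝ) i ^ 2 = f i ^ 2 := by
        intro i hi
        rw [lp.coeFn_sub, Pi.sub_apply, hyU' i, sub_zero]
        intro hiU
        obtain ⟨n, hn, hin⟩ := Finset.mem_biUnion.1 hiU
        have := (hreg.partition i).unique ⟨Nat.succ_pos m, hi⟩ ⟨Nat.succ_pos n, hin⟩
        have := Finset.mem_range.1 hn
        omega
      rw [Finset.sum_congr rfl h1]
      refine (hblock f hf m).trans (mul_le_mul_of_nonneg_left ?_ hC.le)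
      exact pow_le_pow_of_le_one hr0.le hr1.le m.le_succ
  · have hrM : r ^ M ≤ E := by
      rw [hr_def, hE, ← Real.rpow_mul_natCast (by norm_num)]
      refine Real.rpow_le_rpow_of_exponent_le (by norm_num) ?_
      rw [hM]
      push_cast
      have := mul_le_mul_of_nonneg_right hκγ (Nat.cast_nonneg (α := ℝ) k)
      linarith
    calc ∑ m ∈ Finset.range L, b m ≤ ∑ m ∈ Finset.Ico 0 (max L M), b m := by
          rw [← Finset.range_eq_Ico]
          exact Finset.sum_le_sum_of_subset_of_nonneg
            (Finset.range_subset_range.2 (le_max_left _ _)) fun m _ _ => hb0 m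
      _ = ∑ m ∈ Finset.Ico 0 M, b m + ∑ m ∈ Finset.Ico M (max L M), b m :=
          (Finset.sum_Ico_consecutive b (Nat.zero_le M) (le_max_right _ _)).symm
      _ = ∑ m ∈ Finset.Ico 0 M, A' * E + ∑ m ∈ Finset.Ico M (max L M), C * r ^ m := by
          congr 1
          · exact Finset.sum_congr rfl fun m hm => if_pos (Finset.mem_Ico.1 hm).2
          · exact Finset.sum_congr rfl fun m hm => if_neg (not_lt.2 (Finset.mem_Ico.1 hm).1)
      _ ≤ M * (A' * E) + C * (E / (1 - r)) := by
          rw [← Finset.mul_sum (Finset.Ico M (max L M))]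
          gcongr
          · simp
          · refine (geom_sum_Ico_le_of_lt_one hr0.le hr1).trans ?_
            gcongr
      _ = κ * A' * k * E + C / (1 - r) * 1 * E := by
          rw [hM]
          push_cast
          ring
      _ ≤ κ * A' * (k + 1) * E + C / (1 - r) * (k + 1) * E := by
          gcongr
          · linarith
          · linarith [(Nat.cast_nonneg k : (0 : ℝ) ≤ k)]
      _ = _ := by ring

theorem sum_exp_neg_sq_sign_le (z : ℝ) :
    ∑ b : Bool, Real.exp (-((if b then 1 else -1) - z) ^ 2) ≤ 1 + Real.exp (-1) := by
  simp only [Fintype.sum_bool, Bool.false_eq_true, if_true, if_false]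
  have h0 (t : ℝ) : Real.exp (-t ^ 2) ≤ 1 := Real.exp_le_one_iff.2 (by nlinarith [sq_nonneg t])
  have h1 {t : ℝ} (ht : 1 ≤ t ^ 2) : Real.exp (-t ^ 2) ≤ Real.exp (-1) :=
    Real.exp_le_exp.2 (by linarith)
  rcases le_total 0 z with hz | hz
  · exact add_le_add (h0 _) (h1 (by nlinarith))
  · rw [add_comm]
    exact add_le_add (h0 _) (h1 (by nlinarith))

theorem exp_one_eighth_mul_le : Real.exp (1 / 8) * (1 + Real.exp (-1)) ≤ 8 / 5 := by
  have h1 : Real.exp (1 / 8) ≤ 115 / 100 := by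
    have h2 : Real.exp (1 / 8) ^ 8 ≤ (115 / 100 : ℝ) ^ 8 := by
      rw [← Real.exp_nat_mul]
      have := Real.exp_one_lt_d9
      norm_num at this ⊢
      linarith
    exact le_of_pow_le_pow_left₀ (by norm_num) (by norm_num) h2
  have h2 := Real.exp_neg_one_lt_d9
  nlinarith [Real.exp_pos (1 / 8), Real.exp_pos (-1)]

/-- Few sign patterns lie in a small Euclidean ball. -/
theorem card_sign_patterns_le {ι : Type*} [Fintype ι] (z : ι → ℝ) {c ε : ℝ} (hc : 0 < c)
    (hε : ε ^ 2 ≤ c ^ 2 * Fintype.card ι / 8) (T : Finset (ι → Bool))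
    (hT : ∀ τ ∈ T, ∑ i, ((if τ i then c else -c) - z i) ^ 2 ≤ ε ^ 2) :
    (T.card : ℝ) ≤ (8 / 5) ^ Fintype.card ι := by
  classical
  set n := Fintype.card ι
  let φ (i : ι) (b : Bool) : ℝ := Real.exp (-((if b then 1 else -1) - z i / c) ^ 2)
  have hφ : ∑ τ : ι → Bool, ∏ i, φ i (τ i) ≤ (1 + Real.exp (-1)) ^ n := by
    have h1 := Finset.prod_univ_sum (fun _ : ι => (Finset.univ : Finset Bool)) φ
    rw [Fintype.piFinset_univ] at h1
    rw [← h1]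
    calc ∏ i, ∑ b, φ i b ≤ ∏ _i : ι, (1 + Real.exp (-1)) :=
          Finset.prod_le_prod (fun i _ => Finset.sum_nonneg fun b _ => (Real.exp_pos _).le)
            fun i _ => sum_exp_neg_sq_sign_le (z i / c)
      _ = _ := by simp [n]
  have hlow : ∀ τ ∈ T, Real.exp (-(n / 8)) ≤ ∏ i, φ i (τ i) := fun τ hτ => by
    rw [← Real.exp_sum, Real.exp_le_exp]
    have h2 : ∑ i, -((if τ i then (1 : ℝ) else -1) - z i / c) ^ 2 =
        -(∑ i, ((if τ i then c else -c) - z i) ^ 2) / c ^ 2 := by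
      rw [Finset.sum_neg_distrib, neg_div, Finset.sum_div]
      congr 1
      refine Finset.sum_congr rfl fun i _ => ?_
      rw [← div_pow, sub_div]
      split_ifs
      · rw [div_self hc.ne']
      · rw [neg_div, div_self hc.ne']
    rw [h2, le_div_iff₀ (by positivity)]
    have := hT τ hτ
    linarith
  have h3 : (T.card : ℝ) * Real.exp (-(n / 8)) ≤ (1 + Real.exp (-1)) ^ n := by
    calc (T.card : ℝ) * Real.exp (-(n / 8)) = ∑ τ ∈ T, Real.exp (-(n / 8)) := by simp
      _ ≤ ∑ τ ∈ T, ∏ i, φ i (τ i) := Finset.sum_le_sum hlow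
      _ ≤ ∑ τ : ι → Bool, ∏ i, φ i (τ i) :=
        Finset.sum_le_sum_of_subset_of_nonneg (Finset.subset_univ _) fun τ _ _ =>
          Finset.prod_nonneg fun i _ => (Real.exp_pos _).le
      _ ≤ _ := hφ
  calc (T.card : ℝ) = Real.exp (1 / 8) ^ n * (T.card * Real.exp (-(n / 8))) := by
        rw [← Real.exp_nat_mul, mul_left_comm, ← Real.exp_add]
        simp [div_eq_mul_inv]
    _ ≤ Real.exp (1 / 8) ^ n * (1 + Real.exp (-1)) ^ n := by gcongr
    _ = (Real.exp (1 / 8) * (1 + Real.exp (-1))) ^ n := (mul_pow _ _ _).symm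
    _ ≤ (8 / 5) ^ n := by
        gcongr
        exact exp_one_eighth_mul_le

/-- The law of a family of independent fair coin flips. -/
def fairCoins (I : Type*) : Measure (I → Bool) :=
  Measure.infinitePi fun _ => (PMF.uniformOfFintype Bool).toMeasure

instance (I : Type*) : IsProbabilityMeasure (fairCoins I) := by
  unfold fairCoins
  infer_instance

theorem fairCoins_cylinder {I : Type*} (F : Finset I) (τ : I → Bool) :
    fairCoins I ((F : Set I).pi fun i => {τ i}) = (1 / 2) ^ F.card := by
  rw [fairCoins, Measure.infinitePi_pi _ fun i _ => measurableSet_singleton _]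
  simp

/-- Small ball estimate for random sign vectors. -/
theorem fairCoins_smallBall_le {I : Type*} (F : Finset I) (z : I → ℝ) {c ε : ℝ} (hc : 0 < c)
    (hε : ε ^ 2 ≤ c ^ 2 * F.card / 8) :
    fairCoins I {σ | ∑ i ∈ F, ((if σ i then c else -c) - z i) ^ 2 ≤ ε ^ 2} ≤
      ENNReal.ofReal ((2 : ℝ) ^ (-((F.card : ℝ) / 4))) := by
  classical
  let T : Finset (F → Bool) := Finset.univ.filter fun τ =>
    ∑ i : F, ((if τ i then c else -c) - z i) ^ 2 ≤ ε ^ 2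
  have hT : (T.card : ℝ) ≤ (8 / 5) ^ F.card := by
    have := card_sign_patterns_le (fun i : F => z i) hc (ε := ε) (by simpa using hε) T
      fun τ hτ => (Finset.mem_filter.1 hτ).2
    simpa using this
  let ext (τ : F → Bool) (i : I) : Bool := if h : i ∈ F then τ ⟨i, h⟩ else true
  have hsub : {σ : I → Bool | ∑ i ∈ F, ((if σ i then c else -c) - z i) ^ 2 ≤ ε ^ 2} ⊆
      ⋃ τ ∈ T, (F : Set I).pi fun i => {ext τ i} := fun σ hσ => by
    refine Set.mem_iUnion₂.2 ⟨fun i => σ i, Finset.mem_filter.2 ⟨Finset.mem_univ _, ?_⟩, ?_⟩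
    · rw [Finset.sum_coe_sort F fun i => ((if σ i then c else -c) - z i) ^ 2]
      exact hσ
    · intro i hi
      simp only [Finset.mem_coe] at hi
      simp [ext, hi]
  calc _ ≤ ∑ τ ∈ T, fairCoins I ((F : Set I).pi fun i => {ext τ i}) :=
        (measure_mono hsub).trans (measure_biUnion_finset_le _ _)
    _ = ENNReal.ofReal (T.card * (1 / 2) ^ F.card) := by
        simp only [fairCoins_cylinder]
        rw [ENNReal.ofReal_mul (by positivity), ENNReal.ofReal_pow (by norm_num),
          ENNReal.ofReal_div_of_pos (by norm_num)]
        simp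
    _ ≤ _ := by
        refine ENNReal.ofReal_le_ofReal ?_
        calc (T.card : ℝ) * (1 / 2) ^ F.card ≤ (8 / 5) ^ F.card * (1 / 2) ^ F.card := by gcongr
          _ = (4 / 5 : ℝ) ^ F.card := by
            rw [← mul_pow]
            norm_num
          _ ≤ ((2 : ℝ) ^ (-(1 / 4 : ℝ))) ^ F.card := by
            gcongr
            refine le_of_pow_le_pow_left₀ (n := 4) (by norm_num) (by positivity) ?_
            rw [← Real.rpow_mul_natCast (by norm_num)]
            norm_num [Real.rpow_neg]
          _ = _ := by
            rw [← Real.rpow_mul_natCast (by norm_num)]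
            congr 1
            ring

theorem finsetLpNorm_le_of_abs_le {I : Type*} {p : ℝ≥0∞} (hp : 0 < p) {F : Finset I} {x : I → ℝ}
    {c : ℝ} (hc : 0 ≤ c) (h : ∀ i ∈ F, |x i| ≤ c) :
    finsetLpNorm p F x ≤ ENNReal.ofReal ((F.card : ℝ) ^ (1 / p.toReal) * c) := by
  unfold finsetLpNorm
  split_ifs with hp'
  · refine iSup₂_le fun i hi => ENNReal.ofReal_le_ofReal ?_
    simpa [hp'] using h i hi
  · have hr : 0 < p.toReal := ENNReal.toReal_pos hp.ne' hp'
    rw [one_div, ENNReal.rpow_inv_le_iff hr, ENNReal.ofReal_rpow_of_nonneg (by positivity) hr.le,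
      Real.mul_rpow (by positivity) hc, Real.rpow_inv_rpow (by positivity) hr.ne']
    calc ∑ i ∈ F, ENNReal.ofReal |x i| ^ p.toReal ≤ ∑ i ∈ F, ENNReal.ofReal (c ^ p.toReal) := by
          refine Finset.sum_le_sum fun i hi => ?_
          rw [ENNReal.ofReal_rpow_of_nonneg (abs_nonneg _) hr.le]
          exact ENNReal.ofReal_le_ofReal (Real.rpow_le_rpow (abs_nonneg _) (h i hi) hr.le)
      _ = _ := by
          rw [ENNReal.ofReal_mul (by positivity)]
          simp

theorem seqLqNorm_le_one {q : ℝ≥0∞} (hq : 0 < q) {u : ℕ → ℝ≥0∞}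
    (h : ∀ m : ℕ, u m ≤ ENNReal.ofReal ((((m : ℝ) + 1) * (m + 2)) ^ (-(1 / q.toReal)))) :
    seqLqNorm q u ≤ 1 := by
  unfold seqLqNorm
  split_ifs with hq'
  · refine iSup_le fun m => (h m).trans ?_
    simp [hq']
  · have hr : 0 < q.toReal := ENNReal.toReal_pos hq.ne' hq'
    rw [one_div, ENNReal.rpow_inv_le_iff hr, ENNReal.one_rpow]
    refine ENNReal.tsum_le_of_sum_range_le fun n => ?_
    have h1 (m : ℕ) : u m ^ q.toReal ≤ ENNReal.ofReal (1 / (((m : ℝ) + 1) * (m + 2))) := by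
      refine (ENNReal.rpow_le_rpow (h m) hr.le).trans (le_of_eq ?_)
      rw [ENNReal.ofReal_rpow_of_nonneg (by positivity) hr.le, Real.rpow_neg (by positivity),
        Real.inv_rpow (by positivity), one_div, Real.rpow_inv_rpow (by positivity) hr.ne', one_div]
    have h2 : ∑ m ∈ Finset.range n, 1 / (((m : ℝ) + 1) * (m + 2)) = 1 - 1 / ((n : ℝ) + 1) := by
      induction n with
      | zero => simp
      | succ n ih =>
        rw [Finset.sum_range_succ, ih]
        push_cast
        field_simp
        ring
    refine (Finset.sum_le_sum fun m _ => h1 m).trans ?_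
    rw [← ENNReal.ofReal_sum_of_nonneg fun m _ => by positivity, h2, ENNReal.ofReal_le_one]
    have : (0 : ℝ) ≤ 1 / ((n : ℝ) + 1) := by positivity
    linarith

/-- The amplitude, on a block of `n` coordinates at level `m + 1`, of sign vectors in the unit
ball of the mixed norm. -/
def blockAmplitude (p q : ℝ≥0∞) (α : ℝ) (n m : ℕ) : ℝ :=
  (2 : ℝ) ^ (-(α * ((m + 1 : ℕ) : ℝ))) * (n : ℝ) ^ (-(1 / p.toReal)) *
    (((m : ℝ) + 1) * (m + 2)) ^ (-(1 / q.toReal))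

theorem mixedNorm_le_one_of_abs_le {I : Type*} {Pt : ℕ → Finset I} {p q : ℝ≥0∞} (hp : 0 < p)
    (hq : 0 < q) {α : ℝ} (hPt : ∀ m, 0 < (Pt (m + 1)).card) {x : I → ℝ}
    (hx : ∀ m, ∀ i ∈ Pt (m + 1), |x i| ≤ blockAmplitude p q α (Pt (m + 1)).card m) :
    mixedNorm Pt p q α 0 x ≤ 1 := by
  refine seqLqNorm_le_one hq fun m => ?_
  have hn : (0 : ℝ) < (Pt (m + 1)).card := by exact_mod_cast hPt m
  have h1 := finsetLpNorm_le_of_abs_le hp (by unfold blockAmplitude; positivity) (hx m)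
  refine (mul_le_mul_right h1 _).trans (le_of_eq ?_)
  rw [← ENNReal.ofReal_mul (by positivity)]
  congr 1
  rw [Real.rpow_zero, mul_one, blockAmplitude, Real.rpow_neg (by norm_num : (0 : ℝ) ≤ 2),
    Real.rpow_neg hn.le]
  have h2 : (0 : ℝ) < (2 : ℝ) ^ (α * ((m + 1 : ℕ) : ℝ)) := by positivity
  have h3 : (0 : ℝ) < ((Pt (m + 1)).card : ℝ) ^ (1 / p.toReal) := by positivity
  field_simp

theorem min_rpow_mul_rpow_le {a A n N : ℝ} (t : ℝ) (ha : 0 < a) (hA : 0 < A) (hN : 0 < N)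
    (h1 : a * N ≤ n) (h2 : n ≤ A * N) : min (a ^ t) (A ^ t) * N ^ t ≤ n ^ t := by
  have hn : 0 < n := (mul_pos ha hN).trans_le h1
  rcases le_total 0 t with ht | ht
  · calc min (a ^ t) (A ^ t) * N ^ t ≤ a ^ t * N ^ t := by gcongr; exact min_le_left _ _
      _ = (a * N) ^ t := (Real.mul_rpow ha.le hN.le).symm
      _ ≤ n ^ t := by gcongr
  · calc min (a ^ t) (A ^ t) * N ^ t ≤ A ^ t * N ^ t := by gcongr; exact min_le_right _ _
      _ = (A * N) ^ t := (Real.mul_rpow hA.le hN.le).symm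
      _ ≤ n ^ t := Real.rpow_le_rpow_of_nonpos hn h2 ht

/-- Lower bound for the `ℓ²` norm of the sign vectors on the blocks. -/
theorem IsRegularPartition.exists_le_blockAmplitude {I : Type*} {d : ℕ} {Pt : ℕ → Finset I}
    {a A : ℝ} (hreg : IsRegularPartition d Pt a A) (hd : 0 < d) (p q : ℝ≥0∞) {α s : ℝ}
    (hs : α / d - (1 / 2 - 1 / p.toReal) < s) :
    ∃ C : ℝ, 0 < C ∧ ∀ m : ℕ, C * (2 : ℝ) ^ (-(2 * d * s * ((m + 1 : ℕ) : ℝ))) ≤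
      blockAmplitude p q α (Pt (m + 1)).card m ^ 2 * (Pt (m + 1)).card / 8 := by
  have hA : 0 < A := hreg.a_pos.trans hreg.a_lt_A
  have ha := hreg.a_pos
  have hd' : (0 : ℝ) < d := by exact_mod_cast hd
  set s₀ := α / d - (1 / 2 - 1 / p.toReal) with hs₀
  obtain ⟨k, hk⟩ := exists_nat_ge (2 * (2 * (1 / q.toReal)))
  obtain ⟨K, hK, hKle⟩ := exists_pow_mul_rpow_le (r := (2 : ℝ) ^ (-(2 * d * (s - s₀))))
    (by positivity) (Real.rpow_lt_one_of_one_lt_of_neg (by norm_num)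
      (by have := mul_pos hd' (sub_pos.2 hs); linarith)) k
  set t := 1 - 2 * (1 / p.toReal) with ht
  set c₀ := min (a ^ t) (A ^ t) with hc₀
  have hc₀pos : 0 < c₀ := by positivity
  refine ⟨c₀ * K⁻¹ / 8, by positivity, fun m => ?_⟩
  set M : ℝ := ((m + 1 : ℕ) : ℝ) with hM
  have hM1 : M = (m : ℝ) + 1 := by rw [hM]; push_cast; ring
  set n : ℝ := ((Pt (m + 1)).card : ℝ) with hn_def
  have hN : (0 : ℝ) < 2 ^ (d * (m + 1)) := by positivity
  have hn : 0 < n := (mul_pos ha hN).trans_le (hreg.card_lower (m + 1) m.succ_pos)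
  have h1 : c₀ * (2 : ℝ) ^ (d * M * t) ≤ n ^ t := by
    have := min_rpow_mul_rpow_le t ha hA hN (hreg.card_lower (m + 1) m.succ_pos)
      (hreg.card_upper (m + 1) m.succ_pos)
    rw [← Real.rpow_natCast, ← Real.rpow_mul (by norm_num)] at this
    push_cast at this
    rw [hM1]
    exact this
  set w : ℝ := ((m : ℝ) + 1) * (m + 2) with hw
  have hwpos : 0 < w := by positivity
  have h2 : K⁻¹ * (2 : ℝ) ^ (-(2 * d * (s - s₀)) * M) ≤ w ^ (-(2 * (1 / q.toReal))) := by
    have h3 := hKle (m + 1)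
    have h4 : w ^ (2 * (1 / q.toReal)) ≤ (M + 1) ^ k := by
      have hm0 : (0 : ℝ) ≤ m := Nat.cast_nonneg m
      calc w ^ (2 * (1 / q.toReal)) ≤ ((M + 1) ^ 2) ^ (2 * (1 / q.toReal)) := by
            gcongr
            rw [hw, hM1]
            nlinarith
        _ = (M + 1) ^ (2 * (2 * (1 / q.toReal))) := by
            rw [← Real.rpow_natCast_mul (by positivity)]
            norm_num
        _ ≤ (M + 1) ^ (k : ℝ) := Real.rpow_le_rpow_of_exponent_le (by linarith) hk
        _ = (M + 1) ^ k := Real.rpow_natCast _ _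
    rw [← Real.rpow_mul_natCast (by norm_num), ← hM] at h3
    rw [Real.rpow_neg hwpos.le, inv_mul_le_iff₀ hK, ← div_eq_mul_inv, le_div_iff₀ (by positivity)]
    calc _ ≤ (2 : ℝ) ^ (-(2 * d * (s - s₀)) * M) * (M + 1) ^ k := by gcongr
      _ ≤ K := by rw [mul_comm]; exact h3
  have h3 : blockAmplitude p q α (Pt (m + 1)).card m ^ 2 * n =
      (2 : ℝ) ^ (-(2 * α * M)) * n ^ t * w ^ (-(2 * (1 / q.toReal))) := by
    have e1 : n ^ t = (n ^ (-(1 / p.toReal))) ^ 2 * n := by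
      rw [← Real.rpow_mul_natCast hn.le, ← Real.rpow_add_one hn.ne']
      congr 1
      push_cast
      ring
    have e2 : (2 : ℝ) ^ (-(2 * α * M)) = ((2 : ℝ) ^ (-(α * M))) ^ 2 := by
      rw [← Real.rpow_mul_natCast (by norm_num)]
      congr 1
      push_cast
      ring
    have e3 : w ^ (-(2 * (1 / q.toReal))) = (w ^ (-(1 / q.toReal))) ^ 2 := by
      rw [← Real.rpow_mul_natCast hwpos.le]
      congr 1
      push_cast
      ring
    rw [e1, e2, e3, blockAmplitude]
    ring
  rw [h3]
  have h4 : (2 : ℝ) ^ (-(2 * d * s * M)) = (2 : ℝ) ^ (-(2 * α * M)) * (2 : ℝ) ^ (d * M * t) *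
      (2 : ℝ) ^ (-(2 * d * (s - s₀)) * M) := by
    rw [← Real.rpow_add (by norm_num), ← Real.rpow_add (by norm_num)]
    congr 1
    rw [ht, hs₀]
    field_simp
    ring
  rw [h4]
  calc _ = (2 : ℝ) ^ (-(2 * α * M)) * (c₀ * (2 : ℝ) ^ (d * M * t)) *
        (K⁻¹ * (2 : ℝ) ^ (-(2 * d * (s - s₀)) * M)) / 8 := by ring
    _ ≤ _ := by gcongr

/-- Passing from small ball estimates at dyadic scales to all small radii. -/
theorem exists_smallBall_of_scales {d : ℕ} (hd : 0 < d) {C a s : ℝ} (hC : 0 < C) (ha : 0 < a)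
    (hs : 0 < s) {Y : Type*} {F : Y → ℝ → ℝ≥0∞}
    (h : ∀ (m : ℕ) (y : Y) (ε : ℝ), ε ^ 2 ≤ C * (2 : ℝ) ^ (-(2 * d * s * ((m + 1 : ℕ) : ℝ))) →
      F y ε ≤ ENNReal.ofReal ((2 : ℝ) ^ (-(a * 2 ^ (d * (m + 1)))))) :
    ∃ c ε₀ : ℝ, 0 < c ∧ 0 < ε₀ ∧ ∀ (y : Y) (ε : ℝ), 0 < ε → ε < ε₀ →
      F y ε ≤ ENNReal.ofReal ((2 : ℝ) ^ (-(c * ε ^ (-(1 : ℝ) / s)))) := by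
  set B := √C
  have hB : 0 < B := Real.sqrt_pos.2 hC
  have hd2 : (1 : ℝ) < 2 ^ d := one_lt_pow₀ (by norm_num) hd.ne'
  refine ⟨a / 2 ^ d * B ^ (1 / s), B * (2 ^ d) ^ (-s), by positivity, by positivity,
    fun y ε hε hε₀ => ?_⟩
  set T := (B / ε) ^ (1 / s) with hT
  have hTd : (2 : ℝ) ^ d ≤ T := by
    rw [hT, one_div, Real.le_rpow_inv_iff_of_pos (by positivity) (by positivity) hs,
      le_div_iff₀ hε]
    rw [Real.rpow_neg (by positivity), ← div_eq_mul_inv, lt_div_iff₀ (by positivity)] at hε₀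
    linarith
  obtain ⟨n, hn1, hn2⟩ := exists_nat_pow_near (hd2.le.trans hTd) hd2
  obtain ⟨m, rfl⟩ : ∃ m, n = m + 1 := by
    refine Nat.exists_eq_succ_of_ne_zero ?_
    rintro rfl
    rw [zero_add, pow_one] at hn2
    linarith
  have hεsq : ε ^ 2 ≤ C * (2 : ℝ) ^ (-(2 * d * s * ((m + 1 : ℕ) : ℝ))) := by
    rw [hT, one_div, Real.le_rpow_inv_iff_of_pos (by positivity) (by positivity) hs,
      le_div_iff₀ hε] at hn1
    have h1 : (((2 : ℝ) ^ d) ^ (m + 1)) ^ s = (2 : ℝ) ^ (d * s * ((m + 1 : ℕ) : ℝ)) := by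
      rw [← pow_mul, ← Real.rpow_natCast, ← Real.rpow_mul (by norm_num)]
      congr 1
      push_cast
      ring
    rw [h1] at hn1
    have h2 : (2 : ℝ) ^ (-(2 * d * s * ((m + 1 : ℕ) : ℝ))) =
        (((2 : ℝ) ^ (d * s * ((m + 1 : ℕ) : ℝ))) ^ 2)⁻¹ := by
      rw [← Real.rpow_mul_natCast (by norm_num), ← Real.rpow_neg (by norm_num)]
      congr 1
      push_cast
      ring
    rw [h2, ← div_eq_mul_inv, le_div_iff₀ (by positivity), ← Real.sq_sqrt hC.le, ← mul_pow,
      mul_comm ε]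
    gcongr
  refine (h m y ε hεsq).trans (ENNReal.ofReal_le_ofReal ?_)
  refine Real.rpow_le_rpow_of_exponent_le (by norm_num) (neg_le_neg ?_)
  have h3 : a / 2 ^ d * B ^ (1 / s) * ε ^ (-(1 : ℝ) / s) = a / 2 ^ d * T := by
    rw [hT, Real.div_rpow hB.le hε.le, neg_div, Real.rpow_neg hε.le]
    ring
  rw [h3, div_mul_eq_mul_div, div_le_iff₀ (by positivity), mul_assoc]
  gcongr
  refine hn2.le.trans (le_of_eq ?_)
  rw [pow_succ _ (m + 1), ← pow_mul]

theorem IsRegularPartition.exists_smallBall_measure {I : Type*} [Countable I]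
    [MeasurableSpace (lp (fun _ : I => ℝ) 2)] [BorelSpace (lp (fun _ : I => ℝ) 2)]
    {d : ℕ} (hd : 0 < d) {Pt : ℕ → Finset I} {a A : ℝ} (hreg : IsRegularPartition d Pt a A)
    {p q : ℝ≥0∞} (hp : 0 < p) (hq : 0 < q) {α : ℝ}
    (hα : (d : ℝ) * max (1 / 2 - 1 / p.toReal) 0 < α)
    (hs₀ : 0 < α / (d : ℝ) - (1 / 2 - 1 / p.toReal))
    (hcomp : IsCompact {f : lp (fun _ : I => ℝ) 2 | mixedNorm Pt p q α 0 ⇑f ≤ 1}) :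
    ∃ P : Measure {f : lp (fun _ : I => ℝ) 2 | mixedNorm Pt p q α 0 ⇑f ≤ 1},
      IsProbabilityMeasure P ∧
      ∀ s : ℝ, α / (d : ℝ) - (1 / 2 - 1 / p.toReal) < s →
        ∃ c ε₀ : ℝ, 0 < c ∧ 0 < ε₀ ∧
          ∀ (y : lp (fun _ : I => ℝ) 2) (ε : ℝ), 0 < ε → ε < ε₀ →
            P {x | (x : lp (fun _ : I => ℝ) 2) ∈ Metric.closedBall y ε} ≤
              ENNReal.ofReal ((2 : ℝ) ^ (-(c * ε ^ (-(1 : ℝ) / s)))) := by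
  have hcard (m : ℕ) : 0 < (Pt (m + 1)).card := by
    have h1 := hreg.card_lower (m + 1) m.succ_pos
    have h2 : 0 < a * 2 ^ (d * (m + 1)) := mul_pos hreg.a_pos (by positivity)
    exact_mod_cast h2.trans_le h1
  let amp (m : ℕ) : ℝ := blockAmplitude p q α (Pt (m + 1)).card m
  have hamp (m : ℕ) : 0 < amp m := by
    have : (0 : ℝ) < (Pt (m + 1)).card := by exact_mod_cast hcard m
    simp only [amp, blockAmplitude]
    positivity
  choose μ hμ using fun i => (hreg.partition i).exists
  have hlevel {m : ℕ} {i : I} (hi : i ∈ Pt (m + 1)) : μ i - 1 = m := by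
    have := (hreg.partition i).unique (hμ i) ⟨m.succ_pos, hi⟩
    omega
  let x (σ : I → Bool) (i : I) : ℝ := if σ i then amp (μ i - 1) else -amp (μ i - 1)
  have hx (σ : I → Bool) : mixedNorm Pt p q α 0 (x σ) ≤ 1 :=
    mixedNorm_le_one_of_abs_le hp hq hcard fun m i hi => by
      have : |x σ i| = amp m := by
        simp only [x, hlevel hi]
        split_ifs
        · exact abs_of_pos (hamp m)
        · rw [abs_neg, abs_of_pos (hamp m)]
      exact this.le
  let Φ (σ : I → Bool) : {f : lp (fun _ : I => ℝ) 2 | mixedNorm Pt p q α 0 ⇑f ≤ 1} :=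
    ⟨⟨x σ, memℓp_two_of_mixedNorm_le_one hreg hp hq hα (hx σ)⟩, hx σ⟩
  have hΦ : Continuous Φ := by
    have := isCompact_iff_compactSpace.1 hcomp
    have hemb : Topology.IsClosedEmbedding
        fun f : {f : lp (fun _ : I => ℝ) 2 | mixedNorm Pt p q α 0 ⇑f ≤ 1} =>
          ((f : lp (fun _ : I => ℝ) 2) : I → ℝ) :=
      (lp.uniformContinuous_coe.continuous.comp continuous_subtype_val).isClosedEmbedding
        fun f g hfg => Subtype.ext (Subtype.ext hfg)
    refine hemb.isEmbedding.continuous_iff.2 (continuous_pi fun i => ?_)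
    exact (continuous_of_discreteTopology
      (f := fun b : Bool => if b then amp (μ i - 1) else -amp (μ i - 1))).comp (continuous_apply i)
  have hΦm : Measurable Φ := hΦ.measurable
  refine ⟨(fairCoins I).map Φ, Measure.isProbabilityMeasure_map hΦm.aemeasurable, fun s hs => ?_⟩
  obtain ⟨C, hC, hClow⟩ := hreg.exists_le_blockAmplitude hd p q hs
  refine exists_smallBall_of_scales hd hC (a := a / 4) (by have := hreg.a_pos; positivity)
    (hs₀.trans hs) fun m y ε hε => ?_
  have hmeas : MeasurableSet {x : {f : lp (fun _ : I => ℝ) 2 | mixedNorm Pt p q α 0 ⇑f ≤ 1} |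
      (x : lp (fun _ : I => ℝ) 2) ∈ Metric.closedBall y ε} :=
    measurable_subtype_coe measurableSet_closedBall
  rw [Measure.map_apply hΦm hmeas]
  refine (measure_mono fun σ hσ => ?_).trans
    ((fairCoins_smallBall_le (Pt (m + 1)) y (hamp m) (hε.trans (hClow m))).trans ?_)
  · have h1 : ‖(Φ σ : lp (fun _ : I => ℝ) 2) - y‖ ≤ ε := by
      rw [← dist_eq_norm]
      exact hσ
    have h2 := sum_sq_le_lp_two_norm_sq ((Φ σ : lp (fun _ : I => ℝ) 2) - y) (Pt (m + 1))
    refine le_trans (le_of_eq (Finset.sum_congr rfl fun i hi => ?_))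
      (h2.trans (by gcongr))
    rw [lp.coeFn_sub, Pi.sub_apply]
    simp only [Φ, x, hlevel hi]
  · refine ENNReal.ofReal_le_ofReal (Real.rpow_le_rpow_of_exponent_le (by norm_num) ?_)
    have := hreg.card_lower (m + 1) m.succ_pos
    linarith

theorem statement1 {I : Type*} [Countable I] [Infinite I]
    [MeasurableSpace (lp (fun _ : I => ℝ) 2)] [BorelSpace (lp (fun _ : I => ℝ) 2)]
    (d : ℕ) (hd : 0 < d) (Pt : ℕ → Finset I) (a A : ℝ)
    (hreg : IsRegularPartition d Pt a A)
    (p q : ℝ≥0∞) (hp : 0 < p) (hq : 0 < q) (α : ℝ)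
    (hα : (d : ℝ) * max (1 / 2 - 1 / p.toReal) 0 < α) :
    (∀ x : I → ℝ, mixedNorm Pt p q α 0 x ≤ 1 → Memℓp x 2) ∧
    IsCompact {f : lp (fun _ : I => ℝ) 2 | mixedNorm Pt p q α 0 ⇑f ≤ 1} ∧
    optRate {f : lp (fun _ : I => ℝ) 2 | mixedNorm Pt p q α 0 ⇑f ≤ 1} =
      ENNReal.ofReal (α / (d : ℝ) - (1 / 2 - 1 / p.toReal)) ∧
    ∃ P : Measure {f : lp (fun _ : I => ℝ) 2 | mixedNorm Pt p q α 0 ⇑f ≤ 1},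
      IsProbabilityMeasure P ∧
      ∀ s : ℝ, α / (d : ℝ) - (1 / 2 - 1 / p.toReal) < s →
        ∃ c ε₀ : ℝ, 0 < c ∧ 0 < ε₀ ∧
          ∀ (y : lp (fun _ : I => ℝ) 2) (ε : ℝ), 0 < ε → ε < ε₀ →
            P {x | (x : lp (fun _ : I => ℝ) 2) ∈ Metric.closedBall y ε} ≤
              ENNReal.ofReal ((2 : ℝ) ^ (-(c * ε ^ (-(1 : ℝ) / s)))) := by
  have hd' : (0 : ℝ) < d := by exact_mod_cast hd
  have hs₀ : 0 < α / (d : ℝ) - (1 / 2 - 1 / p.toReal) := by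
    rw [sub_pos, lt_div_iff₀ hd', mul_comm]
    exact (mul_le_mul_of_nonneg_left (le_max_left _ _) hd'.le).trans_lt hα
  obtain ⟨C₁, C₂, hC₁, hC₂, hcov⟩ := hreg.exists_covers hp hq hd hα
  have hrate {s : ℝ} (hs : 0 ≤ s) (hs' : s < α / (d : ℝ) - (1 / 2 - 1 / p.toReal)) :
      CompressibleAt {f : lp (fun _ : I => ℝ) 2 | mixedNorm Pt p q α 0 ⇑f ≤ 1} s :=
    compressibleAt_of_covers hd hC₁ hC₂ hcov hs hs'
  have hcomp : IsCompact {f : lp (fun _ : I => ℝ) 2 | mixedNorm Pt p q α 0 ⇑f ≤ 1} :=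
    ((hrate (half_pos hs₀).le (half_lt_self hs₀)).totallyBounded
      (half_pos hs₀)).isCompact_of_isClosed (isClosed_mixedNorm_le_one Pt p q α 0)
  obtain ⟨P, hP, hsmall⟩ := hreg.exists_smallBall_measure hd hp hq hα hs₀ hcomp
  refine ⟨fun x hx => memℓp_two_of_mixedNorm_le_one hreg hp hq hα hx, hcomp, ?_, P, hP, hsmall⟩
  refine le_antisymm (sSup_le ?_) (le_of_forall_lt fun t ht => ?_)
  · rintro _ ⟨s, ⟨-, hs⟩, rfl⟩
    refine ENNReal.ofReal_le_ofReal (le_of_forall_gt_imp_ge_of_dense fun s' hs' => ?_)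
    obtain ⟨c, ε₀, hc, hε₀, h⟩ := hsmall s' hs'
    exact hs.le_of_smallBall P (hs₀.trans hs') hc hε₀ h
  · have htop : t ≠ ∞ := ht.ne_top
    have hts : t.toReal < α / (d : ℝ) - (1 / 2 - 1 / p.toReal) :=
      (ENNReal.lt_ofReal_iff_toReal_lt htop).1 ht
    obtain ⟨s, hs, hs'⟩ := exists_between hts
    have hs0 : 0 ≤ s := ENNReal.toReal_nonneg.trans hs.le
    exact ((ENNReal.lt_ofReal_iff_toReal_lt htop).2 hs).trans_le
      (le_sSup ⟨s, ⟨hs0, hrate hs0 hs'⟩, rfl⟩)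
end
end

section
/- Let X, Y, Z be real Banach spaces, S_X ⊆ X, S_Y ⊆ Y, S ⊆ Z, and suppose: (1) s*(S_X, X) = s*(S_Y, Y) =: s0 with s0 < ∞; (2) there is a Lipschitz continuous map Φ : S_X → Z (Lipschitz with respect to the X-norm on S_X and the Z-norm) with Φ(S_X) ⊇ S; (3) there is a Borel probability measure P on S_Y of growth order s0; (4) there is a measurable map Ψ : S_Y → S (with respect to the trace Borel σ-algebras) which is expansive, i.e., there is κ > 0 with ‖Ψ(x) − Ψ(x')‖_Z ≥ κ·‖x − x'‖_Y for all x, x' ∈ S_Y. Then s*(S, Z) = s0, and the pushforward measure P ∘ Ψ^{−1} is a Borel probability measure on S of growth order s0. -/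
open MeasureTheory Metric Set ENNReal

noncomputable section

variable {X : Type*}

/-- Compressibility pulls back along maps `g : A → B` that contract distances by at most a
constant factor. -/
theorem CompressibleAt.of_expansive {V W : Type*} [NormedAddCommGroup V] [NormedAddCommGroup W]
    {A : Set V} {B : Set W} {s : ℝ} (hB : CompressibleAt B s) (g : A → B) (C : ℝ) (hC : 0 ≤ C)
    (hg : ∀ a a' : A, ‖(a : V) - (a' : V)‖ ≤ C * ‖(g a : W) - (g a' : W)‖) :
    CompressibleAt A s := by
  classical
  obtain ⟨E, D, K, hK⟩ := hB
  refine ⟨fun R a => E R (g a),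
    fun R b => if h : ∃ a : A, E R (g a) = b then ((h.choose : A) : V) else 0,
    C * (2 * K), fun R hR a => ?_⟩
  have h : ∃ a' : A, E R (g a') = E R (g a) := ⟨a, rfl⟩
  simp only [dif_pos h]
  have hrep : E R (g h.choose) = E R (g a) := h.choose_spec
  generalize h.choose = a' at hrep ⊢
  have h1 := hK R hR (g a)
  have h2 := hK R hR (g a')
  rw [hrep] at h2
  have hR0 : 0 ≤ (R : ℝ) ^ s := by positivity
  have htri : ‖(g a : W) - (g a' : W)‖ ≤
      ‖(g a : W) - D R (E R (g a))‖ + ‖(g a' : W) - D R (E R (g a))‖ := by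
    rw [norm_sub_rev (g a' : W)]
    exact norm_sub_le_norm_sub_add_norm_sub _ _ _
  calc (R : ℝ) ^ s * ‖(a : V) - (a' : V)‖
      ≤ (R : ℝ) ^ s * (C * (‖(g a : W) - D R (E R (g a))‖ + ‖(g a' : W) - D R (E R (g a))‖)) := by
        gcongr
        exact (hg a a').trans (by gcongr)
    _ = C * ((R : ℝ) ^ s * ‖(g a : W) - D R (E R (g a))‖ +
          (R : ℝ) ^ s * ‖(g a' : W) - D R (E R (g a))‖) := by ring
    _ ≤ C * (2 * K) := by gcongr; linarith

theorem optRate_le_of_expansive {V W : Type*} [NormedAddCommGroup V] [NormedAddCommGroup W]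
    {A : Set V} {B : Set W} (g : A → B) (C : ℝ) (hC : 0 ≤ C)
    (hg : ∀ a a' : A, ‖(a : V) - (a' : V)‖ ≤ C * ‖(g a : W) - (g a' : W)‖) :
    optRate B ≤ optRate A :=
  sSup_le_sSup (image_mono fun _ hs => ⟨hs.1, hs.2.of_expansive g C hC hg⟩)

/-- The growth order of a measure is preserved under pushforward by an expansive map. -/
theorem HasGrowthOrder.map_expansive {V W : Type*} [NormedAddCommGroup V] [MeasurableSpace V]
    [NormedAddCommGroup W] [MeasurableSpace W] [BorelSpace W]
    {A : Set V} {B : Set W} {P : Measure A} {s₀ : ℝ} (hP : HasGrowthOrder A P s₀)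
    {g : A → B} (hmeas : Measurable g) {κ : ℝ} (hκ : 0 < κ)
    (hg : ∀ a a' : A, κ * ‖(a : V) - (a' : V)‖ ≤ ‖(g a : W) - (g a' : W)‖) :
    HasGrowthOrder B (P.map g) s₀ := by
  intro s hs
  obtain ⟨ε₀, c, hε₀, hc, hball⟩ := hP s hs
  refine ⟨ε₀ * κ / 2, c * (2 / κ) ^ (-(1 : ℝ) / s), by positivity, by positivity,
    fun x ε hε hεlt => ?_⟩
  have hclosed : MeasurableSet {y : B | (y : W) ∈ closedBall x ε} :=
    measurable_subtype_coe isClosed_closedBall.measurableSet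
  rw [Measure.map_apply hmeas hclosed]
  rcases (g ⁻¹' {y : B | (y : W) ∈ closedBall x ε}).eq_empty_or_nonempty with hempty | ⟨a₀, ha₀⟩
  · rw [hempty]
    simp
  have hsub : g ⁻¹' {y : B | (y : W) ∈ closedBall x ε} ⊆
      {a : A | (a : V) ∈ closedBall (a₀ : V) (2 / κ * ε)} := by
    intro a ha
    simp only [mem_preimage, mem_ofPred_eq, mem_closedBall] at ha ha₀ ⊢
    have htri := dist_triangle_right (g a : W) (g a₀ : W) x
    rw [dist_eq_norm (g a : W) (g a₀ : W)] at htri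
    rw [dist_eq_norm, div_mul_eq_mul_div, le_div_iff₀ hκ]
    linarith [hg a a₀]
  refine (measure_mono hsub).trans ((hball a₀ (2 / κ * ε) (by positivity) ?_).trans_eq ?_)
  · rw [div_mul_eq_mul_div, div_lt_iff₀ hκ]
    linarith
  · rw [Real.mul_rpow (by positivity) hε.le, mul_assoc]

theorem statement2 {X Y Z : Type*}
    [NormedAddCommGroup X] [NormedSpace ℝ X] [CompleteSpace X]
    [NormedAddCommGroup Y] [NormedSpace ℝ Y] [CompleteSpace Y]
    [NormedAddCommGroup Z] [NormedSpace ℝ Z] [CompleteSpace Z]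
    [MeasurableSpace Y] [BorelSpace Y] [MeasurableSpace Z] [BorelSpace Z]
    (SX : Set X) (SY : Set Y) (S : Set Z) (s₀ : ℝ) (hs₀ : 0 ≤ s₀)
    (hSX : optRate SX = ENNReal.ofReal s₀) (hSY : optRate SY = ENNReal.ofReal s₀)
    (Φ : SX → Z) (L : NNReal) (hΦ : LipschitzWith L Φ) (hrange : S ⊆ Set.range Φ)
    (P : Measure SY) [IsProbabilityMeasure P] (hP : HasGrowthOrder SY P s₀)
    (Ψ : SY → S) (hΨmeas : Measurable Ψ) (κ : ℝ) (hκ : 0 < κ)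
    (hexp : ∀ x x' : SY, κ * ‖(x : Y) - (x' : Y)‖ ≤ ‖(↑(Ψ x) : Z) - (↑(Ψ x') : Z)‖) :
    optRate S = ENNReal.ofReal s₀ ∧
    IsProbabilityMeasure (P.map Ψ) ∧ HasGrowthOrder S (P.map Ψ) s₀ := by
  refine ⟨le_antisymm ?_ ?_, Measure.isProbabilityMeasure_map hΨmeas.aemeasurable,
    hP.map_expansive hΨmeas hκ hexp⟩
  · rw [← hSY]
    refine optRate_le_of_expansive Ψ κ⁻¹ (by positivity) fun a a' => ?_
    rw [inv_mul_eq_div, le_div_iff₀ hκ, mul_comm]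
    exact hexp a a'
  · rw [← hSX]
    choose g hg using fun z : S => hrange z.2
    refine optRate_le_of_expansive g L L.2 fun a a' => ?_
    have h := hΦ.dist_le_mul (g a) (g a')
    rwa [hg, hg, Subtype.dist_eq, dist_eq_norm, dist_eq_norm] at h
end
end

section
/- Let X be a real Banach space, S ⊆ X, and let P be a Borel probability measure on S. Let s > 0 and c, ε0 > 0 be such that P(S ∩ B̄(y, ε)) ≤ 2^{−c·ε^{−1/s}} for all y ∈ X and all ε ∈ (0, ε0). Then for every R ∈ ℕ, every encoding/decoding pair (E, D) of code-length R for S, and every ε ∈ (0, ε0), the outer measure satisfies P*({x ∈ S : ‖x − D(E(x))‖ ≤ ε}) ≤ 2^{R − c·ε^{−1/s}}. -/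
open MeasureTheory Metric Set ENNReal

noncomputable section

variable {X : Type*}

theorem statement3 {X : Type*} [NormedAddCommGroup X] [NormedSpace ℝ X] [CompleteSpace X]
    [MeasurableSpace X] [BorelSpace X]
    (S : Set X) (P : Measure S) [IsProbabilityMeasure P]
    (s c ε₀ : ℝ) (hs : 0 < s) (hc : 0 < c) (hε₀ : 0 < ε₀)
    (hgrowth : ∀ (y : X) (ε : ℝ), 0 < ε → ε < ε₀ →
      P {x : S | (x : X) ∈ Metric.closedBall y ε} ≤
        ENNReal.ofReal ((2 : ℝ) ^ (-(c * ε ^ (-(1 : ℝ) / s)))))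
    (R : ℕ) (hR : 0 < R)
    (E : S → (Fin R → Bool)) (D : (Fin R → Bool) → X)
    (ε : ℝ) (hε : 0 < ε) (hεε₀ : ε < ε₀) :
    P {x : S | ‖(x : X) - D (E x)‖ ≤ ε} ≤
      ENNReal.ofReal ((2 : ℝ) ^ ((R : ℝ) - c * ε ^ (-(1 : ℝ) / s))) := by
  calc P {x : S | ‖(x : X) - D (E x)‖ ≤ ε}
      ≤ P (⋃ b : Fin R → Bool, {x : S | (x : X) ∈ Metric.closedBall (D b) ε}) := by
        refine measure_mono fun x hx => Set.mem_iUnion.2 ⟨E x, ?_⟩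
        exact mem_closedBall_iff_norm.2 hx
    _ ≤ ∑ b : Fin R → Bool, P {x : S | (x : X) ∈ Metric.closedBall (D b) ε} :=
        measure_iUnion_fintype_le _ _
    _ ≤ ∑ _b : Fin R → Bool, ENNReal.ofReal ((2 : ℝ) ^ (-(c * ε ^ (-(1 : ℝ) / s)))) :=
        Finset.sum_le_sum fun b _ => hgrowth (D b) ε hε hεε₀
    _ = ENNReal.ofReal ((2 : ℝ) ^ ((R : ℝ) - c * ε ^ (-(1 : ℝ) / s))) := by
        rw [sub_eq_add_neg, Real.rpow_add two_pos, Real.rpow_natCast,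
          ENNReal.ofReal_mul (by positivity), ENNReal.ofReal_pow two_pos.le]
        simp
end
end

section
/- Let X be a real Banach space, S ⊆ X, and let P be a Borel probability measure on S of growth order s0 ∈ [0,∞). Then for every s > s0 and every K > 0 there exists R0 ∈ ℕ (depending only on s, s0, K, P, S, X but not on the codec) such that for every R ∈ ℕ with R ≥ R0 and every encoding/decoding pair (E, D) of code-length R for S, the outer measure satisfies P*({x ∈ S : ‖x − D(E(x))‖ ≤ K·R^{−s}}) ≤ 2^{−R}. -/
open MeasureTheory Metric Set ENNReal

noncomputable section

variable {X : Type*}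

/-- The set of points reconstructed up to error `ε` by a code with `2 ^ R` codewords is covered by
`2 ^ R` closed balls, so its outer measure is controlled by that of the balls. -/
theorem measure_reconstructed_le [NormedAddCommGroup X] [MeasurableSpace X] {S : Set X}
    (P : Measure S) {R : ℕ} (E : S → (Fin R → Bool)) (D : (Fin R → Bool) → X) {ε : ℝ} {b : ℝ≥0∞}
    (hb : ∀ x : X, P {y : S | (y : X) ∈ Metric.closedBall x ε} ≤ b) :
    P {x : S | ‖(x : X) - D (E x)‖ ≤ ε} ≤ 2 ^ R * b := by
  calc P {x : S | ‖(x : X) - D (E x)‖ ≤ ε}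
      ≤ P (⋃ w : Fin R → Bool, {y : S | (y : X) ∈ Metric.closedBall (D w) ε}) := by
        refine measure_mono fun x hx => mem_iUnion.2 ⟨E x, ?_⟩
        simpa [dist_eq_norm] using hx
    _ ≤ ∑ w : Fin R → Bool, P {y : S | (y : X) ∈ Metric.closedBall (D w) ε} :=
        measure_iUnion_fintype_le _ _
    _ ≤ ∑ _w : Fin R → Bool, b := Finset.sum_le_sum fun w _ => hb (D w)
    _ = 2 ^ R * b := by simp

/-- If `0 < t < s`, then `c (K R ^ (-s)) ^ (-1 / t)` grows superlinearly in `R`. -/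
theorem eventually_two_mul_le_mul_rpow {s t c K : ℝ} (ht : 0 < t) (hts : t < s) (hc : 0 < c)
    (hK : 0 < K) :
    ∀ᶠ R : ℕ in Filter.atTop, 2 * (R : ℝ) ≤ c * (K * (R : ℝ) ^ (-s)) ^ (-(1 : ℝ) / t) := by
  have hlim : Filter.Tendsto (fun R : ℕ => (R : ℝ) ^ (s / t - 1)) Filter.atTop Filter.atTop :=
    (tendsto_rpow_atTop (sub_pos.2 ((one_lt_div ht).2 hts))).comp tendsto_natCast_atTop_atTop
  have ha : 0 < c * K ^ (-(1 : ℝ) / t) := mul_pos hc (Real.rpow_pos_of_pos hK _)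
  filter_upwards [hlim.eventually_ge_atTop (2 / (c * K ^ (-(1 : ℝ) / t))),
    Filter.eventually_gt_atTop 0] with R hR hR0
  have hRpos : (0 : ℝ) < R := Nat.cast_pos.2 hR0
  have hexp : ((R : ℝ) ^ (-s)) ^ (-(1 : ℝ) / t) = (R : ℝ) ^ (s / t - 1) * R := by
    rw [← Real.rpow_mul hRpos.le, Real.rpow_sub_one hRpos.ne', div_mul_cancel₀ _ hRpos.ne']
    congr 1
    ring
  rw [Real.mul_rpow hK.le (Real.rpow_nonneg hRpos.le _), hexp, ← mul_assoc, ← mul_assoc]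
  exact mul_le_mul_of_nonneg_right ((div_le_iff₀' ha).1 hR) hRpos.le

theorem statement4 {X : Type*} [NormedAddCommGroup X] [NormedSpace ℝ X] [CompleteSpace X]
    [MeasurableSpace X] [BorelSpace X]
    (S : Set X) (P : Measure S) [IsProbabilityMeasure P]
    (s₀ : ℝ) (hs₀ : 0 ≤ s₀) (hP : HasGrowthOrder S P s₀)
    (s K : ℝ) (hs : s₀ < s) (hK : 0 < K) :
    ∃ R₀ : ℕ, ∀ R : ℕ, R₀ ≤ R →
      ∀ (E : S → (Fin R → Bool)) (D : (Fin R → Bool) → X),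
        P {x : S | ‖(x : X) - D (E x)‖ ≤ K * (R : ℝ) ^ (-s)} ≤
          ENNReal.ofReal ((2 : ℝ) ^ (-(R : ℝ))) := by
  obtain ⟨t, hs₀t, hts⟩ := exists_between hs
  have ht : 0 < t := hs₀.trans_lt hs₀t
  obtain ⟨ε₀, c, hε₀, hc, hball⟩ := hP t hs₀t
  have hsmall : ∀ᶠ R : ℕ in Filter.atTop, K * (R : ℝ) ^ (-s) < ε₀ := by
    have hlim := ((tendsto_rpow_neg_atTop (ht.trans hts)).comp
      (tendsto_natCast_atTop_atTop (R := ℝ))).const_mul K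
    rw [mul_zero] at hlim
    exact hlim.eventually_lt_const hε₀
  obtain ⟨R₀, hR₀⟩ := Filter.eventually_atTop.1 ((hsmall.and
    (eventually_two_mul_le_mul_rpow ht hts hc hK)).and (Filter.eventually_gt_atTop 0))
  refine ⟨R₀, fun R hR E D => ?_⟩
  obtain ⟨⟨hlt, hgrow⟩, hRpos⟩ := hR₀ R hR
  have hε : 0 < K * (R : ℝ) ^ (-s) :=
    mul_pos hK (Real.rpow_pos_of_pos (Nat.cast_pos.2 hRpos) _)
  refine (measure_reconstructed_le P E D (b := ENNReal.ofReal ((2 : ℝ) ^ (-(2 * (R : ℝ)))))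
    fun x => (hball x _ hε hlt).trans (ENNReal.ofReal_le_ofReal
      (Real.rpow_le_rpow_of_exponent_le one_le_two (neg_le_neg hgrow)))).trans_eq ?_
  have htwo : (2 : ℝ≥0∞) ^ R = ENNReal.ofReal ((2 : ℝ) ^ (R : ℝ)) := by
    rw [Real.rpow_natCast, ENNReal.ofReal_pow zero_le_two, ENNReal.ofReal_ofNat]
  rw [htwo, ← ENNReal.ofReal_mul (Real.rpow_nonneg zero_le_two _), ← Real.rpow_add two_pos]
  congr 2
  ring
end
end

section
/- Let X be a real Banach space, S ⊆ X, and let P be a Borel probability measure on S of growth order s0 ∈ [0,∞). Then s0 is an upper bound for the optimal compression rate of S: for every s ∈ [0,∞) for which there exists a codec C = (E_R, D_R)_{R∈ℕ} for S with sup_{R∈ℕ} R^s·δ(E_R, D_R) < ∞, one has s ≤ s0. In particular s*(S, X) ≤ s0. -/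
open MeasureTheory Metric Set ENNReal

noncomputable section

variable {X : Type*}

open Filter

/-- If a codec of length `R` reproduces every point of `S` up to `ε`, and every closed `ε`-ball has
probability at most `2 ^ (-a)`, then `a ≤ R`. -/
theorem le_codeLength_of_measure_closedBall_le {X : Type*} [NormedAddCommGroup X]
    [MeasurableSpace X] {S : Set X} (P : Measure S) [IsProbabilityMeasure P] {R : ℕ}
    (E : S → (Fin R → Bool)) (D : (Fin R → Bool) → X) {ε a : ℝ}
    (hED : ∀ x : S, ‖(x : X) - D (E x)‖ ≤ ε)
    (hball : ∀ x : X, P {y : S | (y : X) ∈ Metric.closedBall x ε} ≤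
      ENNReal.ofReal ((2 : ℝ) ^ (-a))) :
    a ≤ R := by
  have hcover : (univ : Set S) ⊆
      ⋃ b : Fin R → Bool, {y : S | (y : X) ∈ Metric.closedBall (D b) ε} := by
    intro x _
    refine mem_iUnion.2 ⟨E x, ?_⟩
    simpa [dist_eq_norm] using hED x
  have hone : (1 : ℝ≥0∞) ≤ ENNReal.ofReal ((2 : ℝ) ^ ((R : ℝ) - a)) := by
    calc (1 : ℝ≥0∞) = P univ := measure_univ.symm
      _ ≤ P (⋃ b : Fin R → Bool, {y : S | (y : X) ∈ Metric.closedBall (D b) ε}) :=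
          measure_mono hcover
      _ ≤ ∑ b : Fin R → Bool, P {y : S | (y : X) ∈ Metric.closedBall (D b) ε} :=
          measure_iUnion_fintype_le _ _
      _ ≤ ∑ _b : Fin R → Bool, ENNReal.ofReal ((2 : ℝ) ^ (-a)) :=
          Finset.sum_le_sum fun b _ => hball (D b)
      _ = ENNReal.ofReal ((2 : ℝ) ^ ((R : ℝ) - a)) := by
          rw [sub_eq_add_neg, Real.rpow_add two_pos, Real.rpow_natCast,
            ENNReal.ofReal_mul (by positivity), ENNReal.ofReal_pow two_pos.le]
          simp
  by_contra! hlt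
  have : (2 : ℝ) ^ ((R : ℝ) - a) < 1 :=
    Real.rpow_lt_one_of_one_lt_of_neg one_lt_two (sub_neg.2 hlt)
  exact absurd (ENNReal.one_le_ofReal.1 hone) this.not_ge

/-- A growth order of a probability measure on `S` bounds every achievable compression rate. -/
theorem CompressibleAt.le_of_hasGrowthOrder {X : Type*} [NormedAddCommGroup X]
    [MeasurableSpace X] {S : Set X} {P : Measure S} [IsProbabilityMeasure P] {s₀ s : ℝ}
    (hs₀ : 0 ≤ s₀) (hP : HasGrowthOrder S P s₀) (hs : CompressibleAt S s) : s ≤ s₀ := by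
  by_contra! hlt
  obtain ⟨t, hs₀t, hts⟩ := exists_between hlt
  have ht : 0 < t := hs₀.trans_lt hs₀t
  obtain ⟨ε₀, c, hε₀, hc, hball⟩ := hP t hs₀t
  obtain ⟨E, D, K, hK⟩ := hs
  set L : ℝ := max K 1
  have hL : 0 < L := lt_max_of_lt_right one_pos
  have hsmall : ∀ᶠ R : ℕ in atTop, L * (R : ℝ) ^ (-s) < ε₀ := by
    have h := ((tendsto_rpow_neg_atTop (ht.trans hts)).comp
      tendsto_natCast_atTop_atTop).const_mul L
    rw [mul_zero] at h
    exact h.eventually_lt_const hε₀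
  have hA : 0 < c * L ^ (-(1 : ℝ) / t) := by positivity
  have hgrow : ∀ᶠ R : ℕ in atTop, 1 < c * L ^ (-(1 : ℝ) / t) * (R : ℝ) ^ (s / t - 1) := by
    have hexp : 0 < s / t - 1 := sub_pos.2 ((one_lt_div ht).2 hts)
    exact (((tendsto_rpow_atTop hexp).comp tendsto_natCast_atTop_atTop).const_mul_atTop
      hA).eventually_gt_atTop 1
  obtain ⟨R, hRsmall, hRgrow, hR⟩ :=
    (hsmall.and (hgrow.and (eventually_gt_atTop (0 : ℕ)))).exists
  have hR' : (0 : ℝ) < R := Nat.cast_pos.2 hR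
  have hle := le_codeLength_of_measure_closedBall_le P (E R) (D R)
    (ε := L * (R : ℝ) ^ (-s)) (a := c * (L * (R : ℝ) ^ (-s)) ^ (-(1 : ℝ) / t))
    (fun x => by
      rw [Real.rpow_neg hR'.le, ← div_eq_mul_inv, le_div_iff₀' (by positivity)]
      exact (hK R hR x).trans (le_max_left _ _))
    (fun x => hball x _ (by positivity) hRsmall)
  have hpow : (L * (R : ℝ) ^ (-s)) ^ (-(1 : ℝ) / t) =
      L ^ (-(1 : ℝ) / t) * (R : ℝ) ^ (s / t - 1) * R := by
    rw [Real.mul_rpow hL.le (by positivity), ← Real.rpow_mul hR'.le, mul_assoc,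
      ← Real.rpow_add_one hR'.ne']
    congr 2
    ring
  rw [hpow] at hle
  nlinarith [mul_lt_mul_of_pos_right hRgrow hR']

theorem statement6 {X : Type*} [NormedAddCommGroup X] [NormedSpace ℝ X] [CompleteSpace X]
    [MeasurableSpace X] [BorelSpace X]
    (S : Set X) (P : Measure S) [IsProbabilityMeasure P]
    (s₀ : ℝ) (hs₀ : 0 ≤ s₀) (hP : HasGrowthOrder S P s₀) :
    (∀ s : ℝ, 0 ≤ s → CompressibleAt S s → s ≤ s₀) ∧
    optRate S ≤ ENNReal.ofReal s₀ := by
  refine ⟨fun s _ hs => hs.le_of_hasGrowthOrder hs₀ hP, sSup_le ?_⟩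
  rintro _ ⟨s, ⟨_, hs⟩, rfl⟩
  exact ENNReal.ofReal_le_ofReal (hs.le_of_hasGrowthOrder hs₀ hP)
end
end

section
/- Let X, Y be real Banach spaces, S ⊆ X, S' ⊆ Y, and let Φ : S → S' be measurable with respect to the trace Borel σ-algebras and expansive, i.e., there is κ > 0 such that ‖Φ(x) − Φ(x')‖_Y ≥ κ·‖x − x'‖_X for all x, x' ∈ S. If s0 ∈ [0,∞) and P is a Borel probability measure on S of growth order s0, then the pushforward measure P ∘ Φ^{−1} is a Borel probability measure on S' which also has growth order s0 (with respect to Y). -/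
open MeasureTheory Metric Set ENNReal

noncomputable section

variable {X : Type*}

/-- The preimage of a closed ball of radius `ε` under an expansive map is contained in a closed ball
of radius `2 / κ * ε` around any of its points. -/
lemma preimage_closedBall_subset_of_expansive {X Y : Type*}
    [NormedAddCommGroup X] [NormedAddCommGroup Y] {S : Set X} {S' : Set Y} {Φ : S → S'}
    {κ : ℝ} (hκ : 0 < κ)
    (hexp : ∀ x x' : S, κ * ‖(x : X) - (x' : X)‖ ≤ ‖(↑(Φ x) : Y) - (↑(Φ x') : Y)‖)
    {y : Y} {ε : ℝ} {x₀ : S} (hx₀ : (Φ x₀ : Y) ∈ closedBall y ε) :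
    Φ ⁻¹' {z : S' | (z : Y) ∈ closedBall y ε} ⊆
      {x : S | (x : X) ∈ closedBall (x₀ : X) (2 / κ * ε)} := by
  intro x hx
  simp only [mem_preimage, mem_ofPred_eq, mem_closedBall] at hx hx₀ ⊢
  have hdist : dist (Φ x : Y) (Φ x₀ : Y) ≤ 2 * ε := by
    linarith [dist_triangle_right (Φ x : Y) (Φ x₀ : Y) y]
  rw [dist_eq_norm] at hdist ⊢
  rw [div_mul_eq_mul_div, le_div_iff₀ hκ, mul_comm]
  exact (hexp x x₀).trans hdist

theorem statement7 {X Y : Type*}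
    [NormedAddCommGroup X] [NormedSpace ℝ X] [CompleteSpace X]
    [NormedAddCommGroup Y] [NormedSpace ℝ Y] [CompleteSpace Y]
    [MeasurableSpace X] [BorelSpace X] [MeasurableSpace Y] [BorelSpace Y]
    (S : Set X) (S' : Set Y)
    (Φ : S → S') (hΦ : Measurable Φ)
    (κ : ℝ) (hκ : 0 < κ)
    (hexp : ∀ x x' : S, κ * ‖(x : X) - (x' : X)‖ ≤ ‖(↑(Φ x) : Y) - (↑(Φ x') : Y)‖)
    (s₀ : ℝ) (hs₀ : 0 ≤ s₀)
    (P : Measure S) [IsProbabilityMeasure P] (hP : HasGrowthOrder S P s₀) :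
    IsProbabilityMeasure (P.map Φ) ∧ HasGrowthOrder S' (P.map Φ) s₀ := by
  refine ⟨Measure.isProbabilityMeasure_map hΦ.aemeasurable, fun s hs => ?_⟩
  obtain ⟨ε₀, c, hε₀, hc, hball⟩ := hP s hs
  have hκ' : 0 < 2 / κ := by positivity
  refine ⟨ε₀ / (2 / κ), c * (2 / κ) ^ (-(1 : ℝ) / s), by positivity, by positivity,
    fun y ε hε hεlt => ?_⟩
  have hmeas : MeasurableSet {z : S' | (z : Y) ∈ closedBall y ε} :=
    measurable_subtype_coe measurableSet_closedBall
  rw [Measure.map_apply hΦ hmeas]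
  rcases (Φ ⁻¹' {z : S' | (z : Y) ∈ closedBall y ε}).eq_empty_or_nonempty with hempty | ⟨x₀, hx₀⟩
  · rw [hempty, measure_empty]
    exact zero_le
  · calc P (Φ ⁻¹' {z : S' | (z : Y) ∈ closedBall y ε})
        ≤ P {x : S | (x : X) ∈ closedBall (x₀ : X) (2 / κ * ε)} :=
          measure_mono (preimage_closedBall_subset_of_expansive hκ hexp hx₀)
      _ ≤ ENNReal.ofReal ((2 : ℝ) ^ (-(c * (2 / κ * ε) ^ (-(1 : ℝ) / s)))) :=
          hball x₀ (2 / κ * ε) (by positivity) (by rwa [mul_comm, ← lt_div_iff₀ hκ'])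
      _ = _ := by rw [Real.mul_rpow hκ'.le hε.le, mul_assoc]
end
end

section
/- Let X, Y be real Banach spaces, S ⊆ X, S' ⊆ Y, and let Φ : S → Y be Lipschitz continuous (with respect to the X-norm on S and the Y-norm) with Φ(S) ⊇ S'. Then for every s ≥ 0: if there exist a codec (E_R, D_R)_{R∈ℕ} for S in X and K > 0 with δ(E_R, D_R) ≤ K·R^{−s} for all R ∈ ℕ, then there exist a codec (E'_R, D'_R)_{R∈ℕ} for S' in Y and K' > 0 with δ(E'_R, D'_R) ≤ K'·R^{−s} for all R ∈ ℕ. In particular s*(S', Y) ≥ s*(S, X). -/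
open MeasureTheory Metric Set ENNReal

noncomputable section

variable {X : Type*}

/-- A codec for `S` induces, through an `L`-Lipschitz map whose range covers `S'`, a codec for `S'`
whose distortion is at most `2 * L` times as large at each code length. -/
theorem LipschitzWith.exists_codec {X Y : Type*} [NormedAddCommGroup X] [NormedAddCommGroup Y]
    {S : Set X} {S' : Set Y} {Φ : S → Y} {L : NNReal} (hΦ : LipschitzWith L Φ)
    (hrange : S' ⊆ Set.range Φ)
    (E : (R : ℕ) → S → (Fin R → Bool)) (D : (R : ℕ) → (Fin R → Bool) → X) :
    ∃ (E' : (R : ℕ) → S' → (Fin R → Bool)) (D' : (R : ℕ) → (Fin R → Bool) → Y),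
      ∀ (R : ℕ) (ε : ℝ), (∀ x : S, ‖(x : X) - D R (E R x)‖ ≤ ε) →
        ∀ y : S', ‖(y : Y) - D' R (E' R y)‖ ≤ 2 * L * ε := by
  classical
  choose g hg using fun y : S' => hrange y.2
  refine ⟨fun R y => E R (g y),
    fun R c => if h : ∃ x : S, E R x = c then Φ h.choose else 0, fun R ε hε y => ?_⟩
  have h : ∃ x : S, E R x = E R (g y) := ⟨g y, rfl⟩
  have hcode := h.choose_spec
  simp only [dif_pos h]
  generalize h.choose = x at hcode ⊢
  have hx := hε x
  rw [hcode] at hx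
  have hdist : ‖(g y : X) - x‖ ≤ ε + ε := by
    rw [← dist_eq_norm] at hx ⊢
    refine (dist_triangle_right _ _ (D R (E R (g y)))).trans (add_le_add ?_ hx)
    simpa [dist_eq_norm] using hε (g y)
  calc ‖(y : Y) - Φ x‖ = dist (Φ (g y)) (Φ x) := by rw [hg, dist_eq_norm]
    _ ≤ L * dist (g y) x := hΦ.dist_le_mul _ _
    _ = L * ‖(g y : X) - x‖ := by rw [Subtype.dist_eq, dist_eq_norm]
    _ ≤ L * (ε + ε) := by gcongr
    _ = 2 * L * ε := by ring

/-- Compressibility at a given rate passes to sets covered by a Lipschitz image. -/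
theorem CompressibleAt.of_lipschitzWith {X Y : Type*} [NormedAddCommGroup X]
    [NormedAddCommGroup Y] {S : Set X} {S' : Set Y} {Φ : S → Y} {L : NNReal} {s : ℝ}
    (hS : CompressibleAt S s) (hΦ : LipschitzWith L Φ) (hrange : S' ⊆ Set.range Φ) :
    CompressibleAt S' s := by
  obtain ⟨E, D, K, hK⟩ := hS
  obtain ⟨E', D', h⟩ := hΦ.exists_codec hrange E D
  refine ⟨E', D', 2 * L * K, fun R hR y => ?_⟩
  have hpos : 0 < (R : ℝ) ^ s := Real.rpow_pos_of_pos (Nat.cast_pos.2 hR) s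
  have hy := h R (K / (R : ℝ) ^ s) (fun x => (le_div_iff₀' hpos).2 (hK R hR x)) y
  rwa [← mul_div_assoc, le_div_iff₀' hpos] at hy

theorem statement8 {X Y : Type*}
    [NormedAddCommGroup X] [NormedSpace ℝ X] [CompleteSpace X]
    [NormedAddCommGroup Y] [NormedSpace ℝ Y] [CompleteSpace Y]
    (S : Set X) (S' : Set Y) (Φ : S → Y) (L : NNReal) (hΦ : LipschitzWith L Φ)
    (hrange : S' ⊆ Set.range Φ) :
    (∀ s : ℝ, 0 ≤ s →
      (∃ (E : (R : ℕ) → S → (Fin R → Bool)) (D : (R : ℕ) → (Fin R → Bool) → X) (K : ℝ),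
        0 < K ∧ ∀ R : ℕ, 0 < R → ∀ x : S, ‖(x : X) - D R (E R x)‖ ≤ K * (R : ℝ) ^ (-s)) →
      (∃ (E' : (R : ℕ) → S' → (Fin R → Bool)) (D' : (R : ℕ) → (Fin R → Bool) → Y) (K' : ℝ),
        0 < K' ∧ ∀ R : ℕ, 0 < R → ∀ y : S', ‖(y : Y) - D' R (E' R y)‖ ≤ K' * (R : ℝ) ^ (-s))) ∧
    optRate S ≤ optRate S' := by
  refine ⟨fun s _ => ?_, sSup_le_sSup (Set.image_mono fun s hs =>
    ⟨hs.1, hs.2.of_lipschitzWith hΦ hrange⟩)⟩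
  rintro ⟨E, D, K, hKpos, hK⟩
  obtain ⟨E', D', h⟩ := hΦ.exists_codec hrange E D
  refine ⟨E', D', 2 * L * K + 1, by positivity, fun R hR y => ?_⟩
  calc ‖(y : Y) - D' R (E' R y)‖ ≤ 2 * L * (K * (R : ℝ) ^ (-s)) := h R _ (hK R hR) y
    _ = 2 * L * K * (R : ℝ) ^ (-s) := by ring
    _ ≤ (2 * L * K + 1) * (R : ℝ) ^ (-s) := by gcongr; linarith
end
end
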